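/- Let A < _T ∅′ be a set that is not K-trivial and D ≤_T ∅′ a non-computable set. Then there exists a Martin-Löf random sequence R such that R ≱_T D, R is low (R′ ≤_T ∅′), and A ⊕ R ≡_T ∅′. -/

import Mathlib

open MeasureTheory ENNReal

/-! ### Cantor space and the uniform (coin-flipping) measure -/

/-- The binary digits of a real number in `[0,1)`, giving a point of Cantor space. -/
noncomputable def binaryDigits (x : ℝ) : ℕ → Bool :=
  fun n => decide (⌊x * 2 ^ (n + 1)⌋ % 2 = 1)

/-- The uniform (Lebesgue / coin-flipping) measure on Cantor space `2^ω`,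
obtained as the pushforward of Lebesgue measure on `[0,1)` under binary expansion. -/
noncomputable def μCantor : Measure (ℕ → Bool) :=
  Measure.map binaryDigits (volume.restrict (Set.Ico (0 : ℝ) 1))

/-- `σ` is an initial segment of the infinite sequence `X`. -/
def IsPrefixOf (σ : List Bool) (X : ℕ → Bool) : Prop :=
  ∀ i : Fin σ.length, X i = σ.get i

/-- The cylinder determined by a finite binary string. -/
def cylinder (σ : List Bool) : Set (ℕ → Bool) := {X | IsPrefixOf σ X}

/-- The open set generated by a set of finite binary strings. -/
def openOf (S : Set (List Bool)) : Set (ℕ → Bool) := ⋃ σ ∈ S, cylinder σ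

/-- The density of a set `P` above the string `τ`: `μ([τ] ∩ P) · 2^{|τ|}`. -/
noncomputable def dens (τ : List Bool) (P : Set (ℕ → Bool)) : ℝ≥0∞ :=
  μCantor (cylinder τ ∩ P) * 2 ^ τ.length

/-- The length-`n` initial segment of `X`, as a finite binary string. -/
def strPrefix (X : ℕ → Bool) (n : ℕ) : List Bool := (List.range n).map X

/-- A set of strings is prefix-free if no element is a proper prefix of another. -/
def PrefixFreeSet (S : Set (List Bool)) : Prop :=
  ∀ σ ∈ S, ∀ τ ∈ S, σ <+: τ → σ = τ

/-- The weight `∑_{σ ∈ S} 2^{-|σ|}` of a set of strings. -/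
noncomputable def weight (S : Set (List Bool)) : ℝ≥0∞ :=
  ∑' σ : S, 2⁻¹ ^ (σ : List Bool).length

/-- A set of strings is bounded if its weight is finite. -/
def BoundedStr (S : Set (List Bool)) : Prop := weight S < ⊤

/-- The tail `X(·+k)` of an infinite binary sequence. -/
def tailSeq (X : ℕ → Bool) (k : ℕ) : ℕ → Bool := fun n => X (n + k)

/-! ### Oracle computability -/

/-- The `e`-th computably enumerable set of naturals (the domain of the `e`-th
partial computable function). -/
def WEnum (e n : ℕ) : Prop := ((Denumerable.ofNat Nat.Partrec.Code e).eval n).Dom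

/-- `OracleComputes e X n m` holds if the `e`-th Turing functional with oracle `X`
outputs `m` on input `n`; a Turing functional is presented by the c.e. set `W_e`
of coded axioms `(σ, n, m)`, and `Γ_e^X(n) = m` iff some initial segment `σ` of `X`
has `(σ, n, m) ∈ W_e`. -/
def OracleComputes (e : ℕ) (X : ℕ → Bool) (n m : ℕ) : Prop :=
  ∃ σ : List Bool, IsPrefixOf σ X ∧
    WEnum e (Nat.pair (Encodable.encode σ) (Nat.pair n m))

def natOfBool (b : Bool) : ℕ := cond b 1 0

/-- `f : ℕ → ℕ` is computable with oracle `A`: some Turing functional with oracle `A`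
has graph exactly `f`. -/
def FnComputableIn (f : ℕ → ℕ) (A : ℕ → Bool) : Prop :=
  ∃ e, ∀ n m, OracleComputes e A n m ↔ m = f n

/-- Turing reducibility `B ≤_T A` for subsets of `ω` (as elements of Cantor space). -/
def TuringLE (B A : ℕ → Bool) : Prop := FnComputableIn (fun n => natOfBool (B n)) A

/-- Turing equivalence. -/
def TuringEquiv (A B : ℕ → Bool) : Prop := TuringLE A B ∧ TuringLE B A

/-- The Turing join `A ⊕ B`. -/
def joinSet (A B : ℕ → Bool) : ℕ → Bool :=
  fun n => if n % 2 = 0 then A (n / 2) else B (n / 2)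

open Classical in
/-- The Turing jump `A′ = {e : Γ_e^A(e)↓}`. -/
noncomputable def jump (A : ℕ → Bool) : ℕ → Bool :=
  fun e => decide (∃ m, OracleComputes e A e m)

/-- The empty oracle. -/
def emptyOracle : ℕ → Bool := fun _ => false

/-- The halting problem `∅′`. -/
noncomputable def zeroJump : ℕ → Bool := jump emptyOracle

/-- A set is computable iff it is Turing reducible to the empty oracle. -/
def ComputableSet (A : ℕ → Bool) : Prop := TuringLE A emptyOracle

/-- A set of naturals is c.e. in `A`. -/
def CeIn (A : ℕ → Bool) (S : Set ℕ) : Prop :=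
  ∃ e, ∀ n, n ∈ S ↔ ∃ m, OracleComputes e A n m

/-- A set of strings is c.e. in `A`. -/
def CeStrIn (A : ℕ → Bool) (S : Set (List Bool)) : Prop :=
  ∃ e, ∀ σ : List Bool, σ ∈ S ↔ ∃ m, OracleComputes e A (Encodable.encode σ) m

/-- A c.e. set of strings. -/
def CeStr (S : Set (List Bool)) : Prop := CeStrIn emptyOracle S

/-! ### Π⁰₁ classes, Martin-Löf randomness, K-triviality -/

/-- A `Π⁰₁(A)` class: the complement of the union of cylinders over an `A`-c.e.
set of strings. -/
def Pi01In (A : ℕ → Bool) (P : Set (ℕ → Bool)) : Prop :=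
  ∃ S : Set (List Bool), CeStrIn A S ∧ P = (openOf S)ᶜ

/-- A `Π⁰₁` class. -/
def Pi01 (P : Set (ℕ → Bool)) : Prop := Pi01In emptyOracle P

/-- The `n`-th level of the `e`-th `A`-effective sequence of open sets. -/
def testLevel (e : ℕ) (A : ℕ → Bool) (n : ℕ) : Set (ℕ → Bool) :=
  openOf {σ | ∃ m, OracleComputes e A (Nat.pair n (Encodable.encode σ)) m}

/-- A Martin-Löf test relative to `A`: a uniformly `A`-c.e. sequence of open sets
`G n` with `μ(G n) ≤ 2^{-n}`. -/
def MLTestIn (A : ℕ → Bool) (G : ℕ → Set (ℕ → Bool)) : Prop :=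
  (∃ e, ∀ n, G n = testLevel e A n) ∧ ∀ n, μCantor (G n) ≤ 2⁻¹ ^ n

/-- `X` is Martin-Löf random relative to `A`: it passes every `A`-Martin-Löf test. -/
def MLRandomIn (A X : ℕ → Bool) : Prop :=
  ∀ G : ℕ → Set (ℕ → Bool), MLTestIn A G → ∃ n, X ∉ G n

/-- `X` is Martin-Löf random. -/
def MLRandom (X : ℕ → Bool) : Prop := MLRandomIn emptyOracle X

/-- The domain of the `e`-th machine, viewed as a set of binary strings. -/
def machineDom (e : ℕ) : Set (List Bool) :=
  {σ | ((Denumerable.ofNat Nat.Partrec.Code e).eval (Encodable.encode σ)).Dom}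

/-- The `e`-th machine is prefix-free. -/
def PrefixFreeMachine (e : ℕ) : Prop := PrefixFreeSet (machineDom e)

/-- Prefix-free Kolmogorov complexity (defined, up to an additive constant, as the
least `|σ| + 2e + 2` over prefix-free machines `e` and programs `σ` producing `x`). -/
noncomputable def Kcpx (x : ℕ) : ℕ :=
  sInf {k | ∃ e, ∃ σ : List Bool, PrefixFreeMachine e ∧
    x ∈ (Denumerable.ofNat Nat.Partrec.Code e).eval (Encodable.encode σ) ∧
    k = σ.length + 2 * e + 2}

/-- `K(n)` means `K(1^n)`. -/
noncomputable def KofNat (n : ℕ) : ℕ := Kcpx (Encodable.encode (List.replicate n true))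

/-- `A` is K-trivial: `K(A↾n) ≤ K(n) + c` for some constant `c`. -/
def KTrivial (A : ℕ → Bool) : Prop :=
  ∃ c, ∀ n, Kcpx (Encodable.encode (strPrefix A n)) ≤ KofNat n + c

/-!
The sequence `R` is built by forcing with `Π⁰₁` classes, effectively in `∅′`; each condition carries
a number `d` such that its class has measure at least `2⁻ᵈ`. Such a class can be shrunk, keeping
about half of its measure, so as to decide an element of the jump of `R` (lowness), to avoid a
sufficiently small level of a test (randomness), and to make a functional disagree with `D`: if no
disagreement could be forced, the values given by the functional on most of the class would compute
`D`.

Coding `∅′` into `A ⊕ R` uses that `A` is not `K`-trivial. A request for a length `ℓ` at cost `k`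
gives each string `σ` of length `ℓ` its own `k + b` locations in column `n`, and `R` codes the
request if it contains all the locations of the initial segment of `A`. These events are independent
and their measures are proportional to `2⁻ᵏ`. By the second moment method, the strings whose events
meet the class of a condition in too small a measure have bounded total weight, so by the
Kraft–Chaitin theorem their complexity is at most `K(ℓ) + O(1)`. As `A` has initial segments of
larger complexity, arbitrarily late requests can be coded. Choosing the first coded request late
enough to bound the halting time of `n`, one recovers from `A ⊕ R`, stage by stage, the coded
requests, hence the bounds `d` on the measures of the classes, and with them `∅′`.
-/

/-! ### Primitive recursion -/

attribute [fun_prop] Primrec PrimrecPred Primrec.id Primrec.const Primrec.pair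

section Primrec

variable {α β γ : Type*} [Primcodable α] [Primcodable β] [Primcodable γ]

@[fun_prop]
theorem primrec_comp {f : β → γ} {g : α → β} (hf : Primrec f) (hg : Primrec g) :
    Primrec fun a => f (g a) := hf.comp hg

@[fun_prop]
theorem primrec_fst {f : α → β × γ} (hf : Primrec f) : Primrec fun a => (f a).1 :=
  Primrec.fst.comp hf

@[fun_prop]
theorem primrec_snd {f : α → β × γ} (hf : Primrec f) : Primrec fun a => (f a).2 :=
  Primrec.snd.comp hf

@[fun_prop]
theorem primrec_add {f g : α → ℕ} (hf : Primrec f) (hg : Primrec g) :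
    Primrec fun a => f a + g a := Primrec.nat_add.comp hf hg

@[fun_prop]
theorem primrec_mul {f g : α → ℕ} (hf : Primrec f) (hg : Primrec g) :
    Primrec fun a => f a * g a := Primrec.nat_mul.comp hf hg

@[fun_prop]
theorem primrec_div {f g : α → ℕ} (hf : Primrec f) (hg : Primrec g) :
    Primrec fun a => f a / g a := Primrec.nat_div.comp hf hg

@[fun_prop]
theorem primrec_mod {f g : α → ℕ} (hf : Primrec f) (hg : Primrec g) :
    Primrec fun a => f a % g a := Primrec.nat_mod.comp hf hg

@[fun_prop]
theorem primrec_pow {f g : α → ℕ} (hf : Primrec f) (hg : Primrec g) :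
    Primrec fun a => f a ^ g a :=
  Primrec₂.comp (Primrec₂.unpaired'.1 Nat.Primrec.pow) hf hg

@[fun_prop]
theorem primrec_natPair {f g : α → ℕ} (hf : Primrec f) (hg : Primrec g) :
    Primrec fun a => Nat.pair (f a) (g a) := Primrec₂.natPair.comp hf hg

@[fun_prop]
theorem primrec_unpair {f : α → ℕ} (hf : Primrec f) : Primrec fun a => Nat.unpair (f a) :=
  Primrec.unpair.comp hf

@[fun_prop]
theorem primrec_encode {f : α → β} (hf : Primrec f) : Primrec fun a => Encodable.encode (f a) :=
  Primrec.encode.comp hf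

@[fun_prop]
theorem primrec_ofNat {δ : Type*} [Denumerable δ] {f : α → ℕ} (hf : Primrec f) :
    Primrec fun a => Denumerable.ofNat δ (f a) := (Primrec.ofNat δ).comp hf

@[fun_prop]
theorem primrec_cons {f : α → β} {g : α → List β} (hf : Primrec f) (hg : Primrec g) :
    Primrec fun a => f a :: g a := Primrec.list_cons.comp hf hg

@[fun_prop]
theorem primrec_append {f g : α → List β} (hf : Primrec f) (hg : Primrec g) :
    Primrec fun a => f a ++ g a := Primrec.list_append.comp hf hg

@[fun_prop]
theorem primrec_length {f : α → List β} (hf : Primrec f) : Primrec fun a => (f a).length :=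
  Primrec.list_length.comp hf

@[fun_prop]
theorem primrec_take {f : α → ℕ} {g : α → List β} (hf : Primrec f) (hg : Primrec g) :
    Primrec fun a => (g a).take (f a) := Primrec.list_take.comp hf hg

@[fun_prop]
theorem primrec_getElem? {g : α → List β} {f : α → ℕ} (hg : Primrec g) (hf : Primrec f) :
    Primrec fun a => (g a)[f a]? := Primrec.list_getElem?.comp hg hf

@[fun_prop]
theorem primrec_getD {g : α → List β} {f : α → ℕ} (hg : Primrec g) (hf : Primrec f) (d : β) :
    Primrec fun a => (g a).getD (f a) d := (Primrec.list_getD d).comp hg hf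

@[fun_prop]
theorem primrec_range {f : α → ℕ} (hf : Primrec f) : Primrec fun a => List.range (f a) :=
  Primrec.list_range.comp hf

@[fun_prop]
theorem primrec_some {f : α → β} (hf : Primrec f) : Primrec fun a => some (f a) :=
  Primrec.option_some.comp hf

@[fun_prop]
theorem primrec_option_getD {f : α → Option β} {g : α → β} (hf : Primrec f) (hg : Primrec g) :
    Primrec fun a => (f a).getD (g a) := Primrec.option_getD.comp hf hg

@[fun_prop]
theorem primrec_decode {f : α → ℕ} (hf : Primrec f) :
    Primrec fun a => Encodable.decode (α := β) (f a) := Primrec.decode.comp hf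

@[fun_prop]
theorem primrec_evaln {k : α → ℕ} {c : α → Nat.Partrec.Code} {n : α → ℕ} (hk : Primrec k)
    (hc : Primrec c) (hn : Primrec n) :
    Primrec fun a => Nat.Partrec.Code.evaln (k a) (c a) (n a) :=
  Nat.Partrec.Code.primrec_evaln.comp ((hk.pair hc).pair hn)

@[fun_prop]
theorem primrec_ite {c : α → Prop} [DecidablePred c] {f g : α → β} (hc : PrimrecPred c)
    (hf : Primrec f) (hg : Primrec g) : Primrec fun a => if c a then f a else g a :=
  Primrec.ite hc hf hg

@[fun_prop]
theorem primrecPred_comp {p : β → Prop} {f : α → β} (hp : PrimrecPred p) (hf : Primrec f) :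
    PrimrecPred fun a => p (f a) := hp.comp hf

@[fun_prop]
theorem primrecPred_and {p q : α → Prop} (hp : PrimrecPred p) (hq : PrimrecPred q) :
    PrimrecPred fun a => p a ∧ q a := hp.and hq

@[fun_prop]
theorem primrecPred_or {p q : α → Prop} (hp : PrimrecPred p) (hq : PrimrecPred q) :
    PrimrecPred fun a => p a ∨ q a := hp.or hq

@[fun_prop]
theorem primrecPred_not {p : α → Prop} (hp : PrimrecPred p) : PrimrecPred fun a => ¬ p a := hp.not

@[fun_prop]
theorem primrecPred_eq {f g : α → β} (hf : Primrec f) (hg : Primrec g) :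
    PrimrecPred fun a => f a = g a := Primrec.eq.comp hf hg

@[fun_prop]
theorem primrecPred_ne {f g : α → β} (hf : Primrec f) (hg : Primrec g) :
    PrimrecPred fun a => f a ≠ g a := (primrecPred_eq hf hg).not

@[fun_prop]
theorem primrecPred_le {f g : α → ℕ} (hf : Primrec f) (hg : Primrec g) :
    PrimrecPred fun a => f a ≤ g a := Primrec.nat_le.comp hf hg

@[fun_prop]
theorem primrecPred_lt {f g : α → ℕ} (hf : Primrec f) (hg : Primrec g) :
    PrimrecPred fun a => f a < g a := Primrec.nat_lt.comp hf hg

theorem primrecPred_forall_mem {p : α → β → Prop} {g : α → List β}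
    (hp : PrimrecPred fun q : α × β => p q.1 q.2) (hg : Primrec g) :
    PrimrecPred fun a => ∀ x ∈ g a, p a x := by
  have h : PrimrecRel fun (x : β) (a : α) => p a x :=
    PrimrecPred.comp (f := fun q : β × α => (q.2, q.1)) hp (by fun_prop)
  exact h.forall_mem_list.comp hg .id

theorem primrecPred_forall_lt {p : α → ℕ → Prop} {g : α → ℕ}
    (hp : PrimrecPred fun q : α × ℕ => p q.1 q.2) (hg : Primrec g) :
    PrimrecPred fun a => ∀ x < g a, p a x :=
  (primrecPred_forall_mem hp (primrec_range hg)).of_eq fun a => by simp only [List.mem_range]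

theorem primrecPred_exists_lt {p : α → ℕ → Prop} {g : α → ℕ}
    (hp : PrimrecPred fun q : α × ℕ => p q.1 q.2) (hg : Primrec g) :
    PrimrecPred fun a => ∃ x < g a, p a x :=
  (primrecPred_forall_lt (p := fun a x => ¬ p a x) hp.not hg).not.of_eq fun a => by push Not; rfl

/-- Decoding made total by a default value, so that a search over `δ` becomes one over `ℕ`. -/
def decodeD (δ : Type*) [Primcodable δ] [Inhabited δ] (n : ℕ) : δ :=
  (Encodable.decode n).getD default

@[simp]
theorem decodeD_encode {δ : Type*} [Primcodable δ] [Inhabited δ] (d : δ) :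
    decodeD δ (Encodable.encode d) = d := by
  simp [decodeD]

@[fun_prop]
theorem primrec_decodeD {δ : Type*} [Primcodable δ] [Inhabited δ] {f : α → ℕ} (hf : Primrec f) :
    Primrec fun a => decodeD δ (f a) := by
  unfold decodeD
  fun_prop

end Primrec

/-! ### Initial segments -/

@[simp]
theorem length_strPrefix (X : ℕ → Bool) (n : ℕ) : (strPrefix X n).length = n := by
  simp [strPrefix]

theorem getElem?_strPrefix (X : ℕ → Bool) {n i : ℕ} (h : i < n) :
    (strPrefix X n)[i]? = some (X i) := by
  simp [strPrefix, h]

theorem take_strPrefix (X : ℕ → Bool) {n i : ℕ} (h : i ≤ n) :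
    (strPrefix X n).take i = strPrefix X i := by
  simp [strPrefix, ← List.map_take, List.take_range, h]

theorem strPrefix_succ (X : ℕ → Bool) (n : ℕ) : strPrefix X (n + 1) = strPrefix X n ++ [X n] := by
  simp [strPrefix, List.range_succ]

theorem strPrefix_length_eq_iff (X : ℕ → Bool) (σ : List Bool) :
    strPrefix X σ.length = σ ↔ ∀ i < σ.length, σ[i]? = some (X i) := by
  constructor
  · intro h i hi
    rw [← h, getElem?_strPrefix X (by simpa using hi)]
  · intro h
    refine List.ext_getElem (by simp) fun i _ hi => ?_
    simpa [strPrefix, List.getElem?_eq_getElem hi, eq_comm] using h i hi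

theorem isPrefixOf_iff (σ : List Bool) (X : ℕ → Bool) :
    IsPrefixOf σ X ↔ strPrefix X σ.length = σ := by
  rw [strPrefix_length_eq_iff]
  refine ⟨fun h i hi => ?_, fun h i => ?_⟩
  · simpa [List.getElem?_eq_getElem hi] using (h ⟨i, hi⟩).symm
  · simpa using (h i i.2).symm

theorem exists_isPrefixOf_iff (X : ℕ → Bool) (p : List Bool → Prop) :
    (∃ σ, IsPrefixOf σ X ∧ p σ) ↔ ∃ s, p (strPrefix X s) := by
  simp only [isPrefixOf_iff]
  constructor
  · rintro ⟨σ, hσ, hp⟩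
    exact ⟨σ.length, by rwa [hσ]⟩
  · rintro ⟨s, hs⟩
    exact ⟨_, by simp, hs⟩

/-! ### Relative arithmetical complexity -/

/-- `p` is `Σ⁰₁` relative to `X`: membership is witnessed by a finite piece of the oracle,
recognized by a primitive recursive predicate. The length of the piece also serves as the stage
of the enumeration. -/
def Sigma01In (X : ℕ → Bool) {α : Type*} [Primcodable α] (p : α → Prop) : Prop :=
  ∃ f : α × List Bool → Prop, PrimrecPred f ∧ ∀ a, p a ↔ ∃ s, f (a, strPrefix X s)

/-- `p` is `Δ⁰₁` relative to `X`, that is, decidable with oracle `X`. -/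
def Delta01In (X : ℕ → Bool) {α : Type*} [Primcodable α] (p : α → Prop) : Prop :=
  Sigma01In X p ∧ Sigma01In X fun a => ¬ p a

section Closure

variable {X Y : ℕ → Bool} {α β δ : Type*} [Primcodable α] [Primcodable β] [Primcodable δ]

namespace Sigma01In

theorem of_iff {p q : α → Prop} (h : Sigma01In X p) (e : ∀ a, p a ↔ q a) : Sigma01In X q :=
  (funext fun a => propext (e a) : p = q) ▸ h

theorem comp {p : β → Prop} {g : α → β} (h : Sigma01In X p) (hg : Primrec g) :
    Sigma01In X fun a => p (g a) := by
  obtain ⟨f, hf, h⟩ := h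
  exact ⟨fun q => f (g q.1, q.2), by fun_prop, fun a => h (g a)⟩

theorem of_primrecPred {p : α → Prop} (h : PrimrecPred p) : Sigma01In X p :=
  ⟨fun q => p q.1, by fun_prop, fun a => by simp only [exists_const]⟩

theorem exists_monotone {p : α → Prop} (h : Sigma01In X p) :
    ∃ f : α × List Bool → Prop, PrimrecPred f ∧
      (∀ a s t, s ≤ t → f (a, strPrefix X s) → f (a, strPrefix X t)) ∧
      ∀ a, p a ↔ ∃ s, f (a, strPrefix X s) := by
  obtain ⟨f, hf, h⟩ := h
  have take_iff : ∀ a s, (∃ i < (strPrefix X s).length + 1, f (a, (strPrefix X s).take i)) ↔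
      ∃ i ≤ s, f (a, strPrefix X i) := fun a s => by
    simp only [length_strPrefix, Nat.lt_succ_iff]
    exact exists_congr fun i => and_congr_right fun hi => by rw [take_strPrefix X hi]
  refine ⟨fun q => ∃ i < q.2.length + 1, f (q.1, q.2.take i), ?_, ?_, fun a => ?_⟩
  · apply primrecPred_exists_lt <;> fun_prop
  · intro a s t hst
    simp only [take_iff]
    exact fun ⟨i, hi, hf⟩ => ⟨i, hi.trans hst, hf⟩
  · simp only [take_iff, h]
    exact ⟨fun ⟨s, hs⟩ => ⟨s, s, le_rfl, hs⟩, fun ⟨_, i, _, hi⟩ => ⟨i, hi⟩⟩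

theorem and {p q : α → Prop} (hp : Sigma01In X p) (hq : Sigma01In X q) :
    Sigma01In X fun a => p a ∧ q a := by
  obtain ⟨f, hf, f_mono, hp⟩ := hp.exists_monotone
  obtain ⟨g, hg, g_mono, hq⟩ := hq.exists_monotone
  refine ⟨fun q => f q ∧ g q, by fun_prop, fun a => ?_⟩
  simp only [hp, hq]
  constructor
  · rintro ⟨⟨s, hs⟩, ⟨t, ht⟩⟩
    exact ⟨max s t, f_mono _ _ _ (le_max_left _ _) hs, g_mono _ _ _ (le_max_right _ _) ht⟩
  · rintro ⟨s, hf, hg⟩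
    exact ⟨⟨s, hf⟩, ⟨s, hg⟩⟩

theorem or {p q : α → Prop} (hp : Sigma01In X p) (hq : Sigma01In X q) :
    Sigma01In X fun a => p a ∨ q a := by
  obtain ⟨f, hf, hp⟩ := hp
  obtain ⟨g, hg, hq⟩ := hq
  exact ⟨fun q => f q ∨ g q, by fun_prop, fun a => by simp only [hp, hq, exists_or]⟩

theorem exists_nat {p : α → ℕ → Prop} (hp : Sigma01In X fun q : α × ℕ => p q.1 q.2) :
    Sigma01In X fun a => ∃ n, p a n := by
  obtain ⟨f, hf, f_mono, hp⟩ := hp.exists_monotone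
  refine ⟨fun q => ∃ n < q.2.length, f ((q.1, n), q.2), ?_, fun a => ?_⟩
  · apply primrecPred_exists_lt <;> fun_prop
  constructor
  · rintro ⟨n, hn⟩
    obtain ⟨s, hs⟩ := (hp (a, n)).1 hn
    exact ⟨max s (n + 1), n, by simp, f_mono _ _ _ (le_max_left _ _) hs⟩
  · rintro ⟨s, n, _, hs⟩
    exact ⟨n, (hp (a, n)).2 ⟨s, hs⟩⟩

theorem exists_of_inhabited [Inhabited δ] {p : α → δ → Prop}
    (hp : Sigma01In X fun q : α × δ => p q.1 q.2) : Sigma01In X fun a => ∃ d, p a d := by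
  have h : Sigma01In X fun a => ∃ n, p a (decodeD δ n) :=
    exists_nat (comp (g := fun q : α × ℕ => (q.1, decodeD δ q.2)) hp (by fun_prop))
  refine h.of_iff fun a => ⟨fun ⟨n, hn⟩ => ⟨_, hn⟩, fun ⟨d, hd⟩ => ⟨Encodable.encode d, ?_⟩⟩
  rwa [decodeD_encode]

theorem forall_lt {p : α → ℕ → Prop} {g : α → ℕ} (hp : Sigma01In X fun q : α × ℕ => p q.1 q.2)
    (hg : Primrec g) : Sigma01In X fun a => ∀ n < g a, p a n := by
  obtain ⟨f, hf, f_mono, hp⟩ := hp.exists_monotone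
  refine ⟨fun q => ∀ n < g q.1, f ((q.1, n), q.2), ?_, fun a => ?_⟩
  · apply primrecPred_forall_lt <;> fun_prop
  constructor
  · intro h
    have stage : ∀ n, ∃ s, n < g a → f ((a, n), strPrefix X s) := fun n => by
      by_cases hn : n < g a
      · exact ((hp (a, n)).1 (h n hn)).imp fun _ hs _ => hs
      · exact ⟨0, fun h => absurd h hn⟩
    choose s hs using stage
    exact ⟨(Finset.range (g a)).sup s, fun n hn =>
      f_mono _ _ _ (Finset.le_sup (f := s) (Finset.mem_range.2 hn)) (hs n hn)⟩
  · rintro ⟨s, hs⟩ n hn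
    exact (hp (a, n)).2 ⟨s, hs n hn⟩

theorem exists_lt {p : α → ℕ → Prop} {g : α → ℕ} (hp : Sigma01In X fun q : α × ℕ => p q.1 q.2)
    (hg : Primrec g) : Sigma01In X fun a => ∃ n < g a, p a n :=
  exists_nat ((of_primrecPred (by fun_prop)).and hp)

end Sigma01In

namespace Delta01In

theorem of_iff {p q : α → Prop} (h : Delta01In X p) (e : ∀ a, p a ↔ q a) : Delta01In X q :=
  (funext fun a => propext (e a) : p = q) ▸ h

theorem comp {p : β → Prop} {g : α → β} (h : Delta01In X p) (hg : Primrec g) :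
    Delta01In X fun a => p (g a) := ⟨h.1.comp hg, h.2.comp hg⟩

theorem of_primrecPred {p : α → Prop} (h : PrimrecPred p) : Delta01In X p :=
  ⟨.of_primrecPred h, .of_primrecPred h.not⟩

theorem not {p : α → Prop} (h : Delta01In X p) : Delta01In X fun a => ¬ p a :=
  ⟨h.2, by simpa only [not_not] using h.1⟩

theorem and {p q : α → Prop} (hp : Delta01In X p) (hq : Delta01In X q) :
    Delta01In X fun a => p a ∧ q a :=
  ⟨hp.1.and hq.1, (hp.2.or hq.2).of_iff fun _ => not_and_or.symm⟩

theorem or {p q : α → Prop} (hp : Delta01In X p) (hq : Delta01In X q) :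
    Delta01In X fun a => p a ∨ q a :=
  ⟨hp.1.or hq.1, (hp.2.and hq.2).of_iff fun _ => not_or.symm⟩

theorem iff {p q : α → Prop} (hp : Delta01In X p) (hq : Delta01In X q) :
    Delta01In X fun a => p a ↔ q a :=
  ((hp.and hq).or (hp.not.and hq.not)).of_iff fun _ => iff_iff_and_or_not_and_not.symm

theorem forall_lt {p : α → ℕ → Prop} {g : α → ℕ} (hp : Delta01In X fun q : α × ℕ => p q.1 q.2)
    (hg : Primrec g) : Delta01In X fun a => ∀ n < g a, p a n :=
  ⟨hp.1.forall_lt hg, (hp.2.exists_lt hg).of_iff fun a => by push Not; rfl⟩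

theorem oracle : Delta01In X fun n => X n = true := by
  have decided_by : ∀ b, Sigma01In X fun n => X n = b := fun b => by
    refine ⟨fun q => q.2[q.1]? = some b, by fun_prop, fun n => ⟨fun h => ⟨n + 1, ?_⟩, ?_⟩⟩
    · exact (getElem?_strPrefix X n.lt_succ_self).trans (congrArg some h)
    · rintro ⟨s, hs⟩
      have hn : n < s := by simpa using (List.getElem?_eq_some_iff.1 hs).1
      simpa [getElem?_strPrefix X hn] using hs
  exact ⟨decided_by true, (decided_by false).of_iff fun n => (Bool.not_eq_true _).symm.to_iff⟩

theorem strPrefix_length_eq (hY : Delta01In X fun n => Y n = true) :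
    Delta01In X fun σ : List Bool => strPrefix Y σ.length = σ := by
  have h : Delta01In X fun σ : List Bool => ∀ i < σ.length, (Y i = true ↔ σ[i]? = some true) :=
    forall_lt ((hY.comp (g := fun q : List Bool × ℕ => q.2) (by fun_prop)).iff
      (of_primrecPred (by fun_prop))) (by fun_prop)
  refine h.of_iff fun σ => ?_
  rw [strPrefix_length_eq_iff]
  refine forall₂_congr fun i hi => ?_
  rw [List.getElem?_eq_getElem hi, Option.some_inj, Option.some_inj, ← Bool.eq_iff_iff, eq_comm]

end Delta01In

namespace Sigma01In

theorem exists_strPrefix (hY : Delta01In X fun n => Y n = true) {p : α → List Bool → Prop}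
    (hp : Sigma01In X fun q : α × List Bool => p q.1 q.2) :
    Sigma01In X fun a => ∃ s, p a (strPrefix Y s) := by
  have h : Sigma01In X fun a => ∃ σ : List Bool, strPrefix Y σ.length = σ ∧ p a σ :=
    exists_of_inhabited ((hY.strPrefix_length_eq.1.comp (g := fun q : α × List Bool => q.2)
      (by fun_prop)).and hp)
  refine h.of_iff fun a => ⟨fun ⟨σ, hσ, hp⟩ => ⟨σ.length, by rwa [hσ]⟩, fun ⟨s, hs⟩ => ?_⟩
  exact ⟨strPrefix Y s, by rw [length_strPrefix], hs⟩

theorem trans {p : α → Prop} (hp : Sigma01In Y p) (hY : Delta01In X fun n => Y n = true) :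
    Sigma01In X p := by
  obtain ⟨f, hf, hp⟩ := hp
  exact (exists_strPrefix (p := fun a σ => f (a, σ)) hY (.of_primrecPred hf)).of_iff
    fun a => (hp a).symm

theorem comp_strPrefix (hY : Delta01In X fun n => Y n = true) {p : α → List Bool → Prop}
    (hp : Sigma01In X fun q : α × List Bool => p q.1 q.2) {g : α → ℕ} (hg : Primrec g) :
    Sigma01In X fun a => p a (strPrefix Y (g a)) := by
  have h := exists_strPrefix (p := fun a σ => σ.length = g a ∧ p a σ) hY
    ((of_primrecPred (by fun_prop)).and hp)
  simpa only [length_strPrefix, exists_eq_left] using h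

end Sigma01In

namespace Delta01In

theorem trans {p : α → Prop} (hp : Delta01In Y p) (hY : Delta01In X fun n => Y n = true) :
    Delta01In X p := ⟨hp.1.trans hY, hp.2.trans hY⟩

theorem comp_strPrefix (hY : Delta01In X fun n => Y n = true) {p : α → List Bool → Prop}
    (hp : Delta01In X fun q : α × List Bool => p q.1 q.2) {g : α → ℕ} (hg : Primrec g) :
    Delta01In X fun a => p a (strPrefix Y (g a)) :=
  ⟨hp.1.comp_strPrefix hY hg, hp.2.comp_strPrefix (p := fun a σ => ¬ p a σ) hY hg⟩

end Delta01In

end Closure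

/-! ### Turing reductions and jumps -/

section Reductions

variable {X Y Z : ℕ → Bool} {α β : Type*} [Primcodable α] [Primcodable β]

theorem exists_code_search {g : ℕ × ℕ → Prop} (hg : PrimrecPred g) {out : ℕ × ℕ → ℕ}
    (hout : Primrec out) : ∃ c : Nat.Partrec.Code, ∀ x, ((c.eval x).Dom ↔ ∃ u, g (x, u)) ∧
      ∀ y ∈ c.eval x, ∃ u, g (x, u) ∧ out (x, u) = y := by
  obtain ⟨_, hg⟩ := hg
  have search : Partrec fun x : ℕ => Nat.rfind fun u => Part.some (decide (g (x, u))) :=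
    Partrec.rfind (p := fun x u => Part.some (decide (g (x, u)))) hg.to_comp.partrec
  have search_out : Partrec fun x : ℕ =>
      (Nat.rfind fun u => Part.some (decide (g (x, u)))).map fun u => out (x, u) :=
    search.map hout.to_comp
  obtain ⟨c, hc⟩ := Nat.Partrec.Code.exists_code.1 (Partrec.nat_iff.1 search_out)
  refine ⟨c, fun x => ?_⟩
  rw [hc]
  refine ⟨Nat.rfind_dom.trans ?_, fun y hy => ?_⟩
  · exact ⟨fun ⟨u, hu, _⟩ => ⟨u, by simpa using hu⟩,
      fun ⟨u, hu⟩ => ⟨u, by simpa using hu, fun _ => trivial⟩⟩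
  · obtain ⟨u, hu, rfl⟩ := (Part.mem_map_iff _).1 hy
    exact ⟨u, by simpa using Nat.rfind_spec hu, rfl⟩

theorem exists_code_dom_iff {g : ℕ × ℕ → Prop} (hg : PrimrecPred g) :
    ∃ c : Nat.Partrec.Code, ∀ x, (c.eval x).Dom ↔ ∃ u, g (x, u) :=
  (exists_code_search hg (out := fun _ => 0) (by fun_prop)).imp fun _ hc x => (hc x).1

theorem exists_wEnum_iff {g : ℕ × ℕ → Prop} (hg : PrimrecPred g) :
    ∃ e, ∀ x, WEnum e x ↔ ∃ u, g (x, u) := by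
  obtain ⟨c, hc⟩ := exists_code_dom_iff hg
  exact ⟨Encodable.encode c, fun x => by rw [WEnum, Denumerable.ofNat_encode, hc]⟩

theorem wEnum_iff_evaln (e n : ℕ) :
    WEnum e n ↔ ∃ k, Nat.Partrec.Code.evaln k (Denumerable.ofNat _ e) n ≠ none := by
  simp only [WEnum, Part.dom_iff_mem, Nat.Partrec.Code.evaln_complete, Option.mem_def,
    Option.ne_none_iff_exists']
  exact exists_comm

theorem sigma01In_wEnum : Sigma01In X fun q : ℕ × ℕ => WEnum q.1 q.2 := by
  have h : Sigma01In X fun q : ℕ × ℕ =>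
      ∃ k, Nat.Partrec.Code.evaln k (Denumerable.ofNat _ q.1) q.2 ≠ none :=
    .exists_nat (.of_primrecPred (by fun_prop))
  exact h.of_iff fun q => (wEnum_iff_evaln _ _).symm

theorem oracleComputes_iff (e : ℕ) (X : ℕ → Bool) (n m : ℕ) : OracleComputes e X n m ↔
    ∃ s, WEnum e (Nat.pair (Encodable.encode (strPrefix X s)) (Nat.pair n m)) :=
  exists_isPrefixOf_iff X fun σ => WEnum e (Nat.pair (Encodable.encode σ) (Nat.pair n m))

theorem sigma01In_oracleComputes :
    Sigma01In X fun q : ℕ × ℕ × ℕ => OracleComputes q.1 X q.2.1 q.2.2 := by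
  have h := Sigma01In.exists_strPrefix (p := fun (q : ℕ × ℕ × ℕ) σ =>
      WEnum q.1 (Nat.pair (Encodable.encode σ) (Nat.pair q.2.1 q.2.2))) (.oracle (X := X))
    (sigma01In_wEnum.comp (g := fun q : (ℕ × ℕ × ℕ) × List Bool =>
      (q.1.1, Nat.pair (Encodable.encode q.2) (Nat.pair q.1.2.1 q.1.2.2))) (by fun_prop))
  exact h.of_iff fun q => (oracleComputes_iff _ _ _ _).symm

theorem turingLE_iff : TuringLE Y X ↔ Delta01In X fun n => Y n = true := by
  constructor
  · rintro ⟨e, he⟩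
    have output_iff : ∀ n b, OracleComputes e X n (natOfBool b) ↔ Y n = b := fun n b => by
      rw [he]
      cases hY : Y n <;> cases b <;> simp [natOfBool, hY]
    constructor
    · exact (sigma01In_oracleComputes.comp (g := fun n : ℕ => (e, n, natOfBool true))
        (by fun_prop)).of_iff fun n => output_iff n true
    · exact (sigma01In_oracleComputes.comp (g := fun n : ℕ => (e, n, natOfBool false))
        (by fun_prop)).of_iff fun n => by rw [output_iff, Bool.not_eq_true]
  · rintro ⟨⟨f, hf, mem_iff⟩, ⟨g, hg, notMem_iff⟩⟩
    -- the triple `(σ, n, m)` is enumerated when `σ` witnesses that `m` is the value at `n`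
    obtain ⟨e, he⟩ := exists_wEnum_iff (g := fun q =>
      (q.1.unpair.2.unpair.2 = 1 ∧
        f (q.1.unpair.2.unpair.1, decodeD (List Bool) q.1.unpair.1)) ∨
      (q.1.unpair.2.unpair.2 = 0 ∧
        g (q.1.unpair.2.unpair.1, decodeD (List Bool) q.1.unpair.1))) (by fun_prop)
    refine ⟨e, fun n m => ?_⟩
    simp only [oracleComputes_iff, he, Nat.unpair_pair, decodeD_encode, exists_const, exists_or,
      exists_and_left, ← mem_iff, ← notMem_iff]
    cases Y n <;> simp [natOfBool]

theorem jump_eq_true_iff (X : ℕ → Bool) (e : ℕ) : jump X e = true ↔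
    ∃ m s, WEnum e (Nat.pair (Encodable.encode (strPrefix X s)) (Nat.pair e m)) := by
  simp [jump, oracleComputes_iff]

theorem sigma01In_jump : Sigma01In X fun e => jump X e = true := by
  have h : Sigma01In X fun e => ∃ m, OracleComputes e X e m :=
    .exists_nat (sigma01In_oracleComputes.comp (g := fun q : ℕ × ℕ => (q.1, q.1, q.2))
      (by fun_prop))
  exact h.of_iff fun e => by simp [jump]

theorem Sigma01In.delta01In_jump [Inhabited α] {p : α → Prop} (h : Sigma01In X p) :
    Delta01In (jump X) p := by
  obtain ⟨f, hf, h⟩ := h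
  obtain ⟨c, hc⟩ := exists_code_dom_iff (g := fun q : ℕ × ℕ =>
    f (decodeD α q.1.unpair.1, decodeD (List Bool) q.1.unpair.2.unpair.1)) (by fun_prop)
  let index (a : α) : ℕ := Encodable.encode (c.curry (Encodable.encode a))
  have primrec_index : Primrec index :=
    Primrec.encode.comp (Nat.Partrec.Code.primrec₂_curry.comp (.const c) .encode)
  refine (Delta01In.oracle.comp primrec_index).of_iff fun a => ?_
  rw [jump_eq_true_iff, h]
  simp [index, WEnum, hc]

theorem primrec_strPrefix_emptyOracle : Primrec fun n => strPrefix emptyOracle n :=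
  Primrec.list_map Primrec.list_range (Primrec.const false).to₂

theorem Sigma01In.exists_primrecPred {p : α → Prop} (h : Sigma01In emptyOracle p) :
    ∃ f : α × ℕ → Prop, PrimrecPred f ∧ ∀ a, p a ↔ ∃ u, f (a, u) := by
  obtain ⟨f, hf, h⟩ := h
  exact ⟨fun q => f (q.1, strPrefix emptyOracle q.2),
    hf.comp (.pair .fst (primrec_strPrefix_emptyOracle.comp .snd)), h⟩

theorem Sigma01In.exists_wEnum_encode_iff [Inhabited α] {p : α → Prop}
    (h : Sigma01In emptyOracle p) : ∃ e, ∀ a, WEnum e (Encodable.encode a) ↔ p a := by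
  obtain ⟨f, hf, h⟩ := h.exists_primrecPred
  obtain ⟨e, he⟩ := exists_wEnum_iff (g := fun q : ℕ × ℕ => f (decodeD α q.1, q.2)) (by fun_prop)
  exact ⟨e, fun a => by simp only [he, decodeD_encode, h]⟩

theorem delta01In_joinSet_left : Delta01In (joinSet X Y) fun n => X n = true :=
  (Delta01In.oracle.comp (g := fun n : ℕ => 2 * n) (by fun_prop)).of_iff fun n => by
    simp [joinSet]

theorem delta01In_joinSet_right : Delta01In (joinSet X Y) fun n => Y n = true :=
  (Delta01In.oracle.comp (g := fun n : ℕ => 2 * n + 1) (by fun_prop)).of_iff fun n => by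
    simp [joinSet, Nat.mul_add_div]

theorem delta01In_joinSet (hX : Delta01In Z fun n => X n = true)
    (hY : Delta01In Z fun n => Y n = true) : Delta01In Z fun n => joinSet X Y n = true := by
  have even : Delta01In Z fun n : ℕ => n % 2 = 0 := .of_primrecPred (by fun_prop)
  have half : Primrec fun n : ℕ => n / 2 := by fun_prop
  refine ((even.and (hX.comp half)).or (even.not.and (hY.comp half))).of_iff fun n => ?_
  by_cases h : n % 2 = 0 <;> simp [joinSet, h]

/-! ### Effective recursion -/

theorem Sigma01In.graph_of_rec [Inhabited β] {Q : ℕ × β × β → Prop} (hQ : Sigma01In X Q)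
    {c : ℕ → β} (rec_iff : ∀ n y, Q (n, c n, y) ↔ y = c (n + 1)) :
    Sigma01In X fun q : ℕ × β => c q.1 = q.2 := by
  -- `c n = y` is witnessed by a list of the values `c 0, …, c n`
  have h : Sigma01In X fun q : ℕ × β => ∃ l : List β, (l[0]? = some (c 0) ∧ l[q.1]? = some q.2) ∧
      ∀ i < q.1, Q (i, l.getD i default, l.getD (i + 1) default) :=
    exists_of_inhabited <| (of_primrecPred (by fun_prop)).and <| forall_lt (hQ.comp
      (g := fun q : ((ℕ × β) × List β) × ℕ =>
        (q.2, q.1.2.getD q.2 default, q.1.2.getD (q.2 + 1) default)) (by fun_prop)) (by fun_prop)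
  refine h.of_iff fun ⟨n, y⟩ => ⟨?_, ?_⟩
  · rintro ⟨l, ⟨h0, hn⟩, step⟩
    have getD_eq : ∀ i ≤ n, l.getD i default = c i := fun i => by
      induction i with
      | zero => simp [h0]
      | succ i ih => exact fun hi => (rec_iff _ _).1 (ih (by omega) ▸ step i hi)
    simpa [hn] using (getD_eq n le_rfl).symm
  · intro (hy : c n = y)
    subst hy
    have getElem?_eq : ∀ i ≤ n, ((List.range (n + 1)).map c)[i]? = some (c i) := fun i hi => by
      simp [Nat.lt_succ_of_le hi]
    refine ⟨(List.range (n + 1)).map c, ⟨getElem?_eq 0 n.zero_le, getElem?_eq n le_rfl⟩, ?_⟩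
    intro i hi
    simp only [List.getD_eq_getElem?_getD, getElem?_eq i hi.le, getElem?_eq (i + 1) hi]
    exact (rec_iff _ _).2 rfl

theorem Delta01In.of_graph [Inhabited β] {c : α → β}
    (hc : Sigma01In X fun q : α × β => c q.1 = q.2) {p : α → β → Prop}
    (hp : Delta01In X fun q : α × β => p q.1 q.2) : Delta01In X fun a => p a (c a) := by
  constructor
  · simpa using Sigma01In.exists_of_inhabited (p := fun a y => c a = y ∧ p a y) (hc.and hp.1)
  · simpa using Sigma01In.exists_of_inhabited (p := fun a y => c a = y ∧ ¬ p a y) (hc.and hp.2)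

theorem Sigma01In.exists_uniformization [Inhabited β] {Q : α × β → Prop} (hQ : Sigma01In X Q) :
    ∃ U : α × β → Prop, Sigma01In X U ∧ (∀ q, U q → Q q) ∧
      (∀ a b b', U (a, b) → U (a, b') → b = b') ∧ ∀ a, (∃ b, Q (a, b)) → ∃ b, U (a, b) := by
  classical
  obtain ⟨f, hf, hQ⟩ := hQ
  let W (a : α) (m : ℕ) : Prop := f ((a, decodeD β m.unpair.1), strPrefix X m.unpair.2)
  have delta01In_W : Delta01In X fun q : α × ℕ => W q.1 q.2 :=
    .comp_strPrefix (p := fun (q : α × ℕ) σ => f ((q.1, decodeD β q.2.unpair.1), σ)) .oracle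
      (.of_primrecPred (by fun_prop)) (by fun_prop)
  -- the value of the uniformization is the first component of the least witness
  refine ⟨fun q => ∃ m, decodeD β m.unpair.1 = q.2 ∧ W q.1 m ∧ ∀ y < m, ¬ W q.1 y,
    .exists_nat (.and (.of_primrecPred (by fun_prop)) (.and ?_ (.forall_lt ?_ (by fun_prop)))),
    ?_, ?_, ?_⟩
  · exact delta01In_W.1.comp (g := fun q : (α × β) × ℕ => (q.1.1, q.2)) (by fun_prop)
  · exact delta01In_W.2.comp (g := fun q : ((α × β) × ℕ) × ℕ => (q.1.1.1, q.2)) (by fun_prop)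
  · rintro ⟨a, _⟩ ⟨m, rfl, hm, -⟩
    exact (hQ _).2 ⟨_, hm⟩
  · rintro a _ _ ⟨m, rfl, hm, m_least⟩ ⟨m', rfl, hm', m'_least⟩
    rw [le_antisymm (not_lt.1 fun h => m_least m' h hm') (not_lt.1 fun h => m'_least m h hm)]
  · rintro a ⟨b, hb⟩
    obtain ⟨s, hs⟩ := (hQ _).1 hb
    have h : ∃ m, W a m := ⟨Nat.pair (Encodable.encode b) s, by
      simpa only [W, Nat.unpair_pair, decodeD_encode]⟩
    exact ⟨_, Nat.find h, rfl, Nat.find_spec h, fun _ => Nat.find_min h⟩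

/-- Effective dependent choice along a relation `Q` enumerable in `X`: the invariant `I` which keeps
`Q` total need not itself be effective. -/
theorem exists_effective_seq [Inhabited β] {Q : (ℕ × β) × β → Prop} (hQ : Sigma01In X Q)
    {I : ℕ → β → Prop} {b₀ : β} (base : I 0 b₀) (total : ∀ n b, I n b → ∃ b', Q ((n, b), b'))
    (preserved : ∀ n b b', Q ((n, b), b') → I (n + 1) b') :
    ∃ c : ℕ → β, (∀ n, I n (c n)) ∧ (∀ n, Q ((n, c n), c (n + 1))) ∧
      Sigma01In X fun q : ℕ × β => c q.1 = q.2 := by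
  obtain ⟨U, hU, U_imp, U_unique, U_total⟩ := hQ.exists_uniformization
  have exists_next : ∀ n b, ∃ b', I n b → U ((n, b), b') := fun n b => by
    by_cases hI : I n b
    · exact (U_total _ (total n b hI)).imp fun _ h _ => h
    · exact ⟨b, fun h => absurd h hI⟩
  choose next next_spec using exists_next
  let c : ℕ → β := fun n => Nat.rec b₀ next n
  have invariant : ∀ n, I n (c n) := fun n => by
    induction n with
    | zero => exact base
    | succ n ih => exact preserved n _ _ (U_imp _ (next_spec n _ ih))
  have step : ∀ n, U ((n, c n), c (n + 1)) := fun n => next_spec n _ (invariant n)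
  refine ⟨c, invariant, fun n => U_imp _ (step n), .graph_of_rec (Q := fun q =>
    U ((q.1, q.2.1), q.2.2)) (hU.comp (by fun_prop)) fun n y => ⟨fun h => ?_, ?_⟩⟩
  · exact U_unique _ _ _ h (step n)
  · rintro rfl
    exact step n

end Reductions

/-! ### The uniform measure on Cantor space -/

/-- The number with binary expansion `σ`, most significant digit first. -/
def binaryValue (σ : List Bool) : ℕ := σ.foldl (fun a b => 2 * a + natOfBool b) 0

theorem binaryValue_concat (σ : List Bool) (b : Bool) :
    binaryValue (σ ++ [b]) = 2 * binaryValue σ + natOfBool b := by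
  simp [binaryValue, List.foldl_append]

theorem binaryValue_lt (σ : List Bool) : binaryValue σ < 2 ^ σ.length := by
  induction σ using List.reverseRecOn with
  | nil => simp [binaryValue]
  | append_singleton σ b ih =>
    rw [binaryValue_concat, List.length_append, List.length_singleton, pow_succ]
    cases b <;> simp [natOfBool] <;> omega

theorem eq_of_binaryValue_eq {σ τ : List Bool} (hl : σ.length = τ.length)
    (h : binaryValue σ = binaryValue τ) : σ = τ := by
  induction σ using List.reverseRecOn generalizing τ with
  | nil => exact (List.length_eq_zero_iff.1 hl.symm).symm
  | append_singleton σ b ih =>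
    rcases List.eq_nil_or_concat' τ with rfl | ⟨τ, c, rfl⟩
    · simp at hl
    · rw [binaryValue_concat, binaryValue_concat] at h
      obtain ⟨hv, rfl⟩ : binaryValue σ = binaryValue τ ∧ b = c := by
        cases b <;> cases c <;> simp [natOfBool] at h ⊢ <;> omega
      rw [ih (by simpa using hl) hv]

theorem floor_two_mul (y : ℝ) : ⌊2 * y⌋ = 2 * ⌊y⌋ + ⌊2 * y⌋ % 2 := by
  have hle : 2 * ⌊y⌋ ≤ ⌊2 * y⌋ := by
    rw [Int.le_floor]; push_cast; linarith [Int.floor_le y]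
  have hlt : ⌊2 * y⌋ < 2 * ⌊y⌋ + 2 := by
    rw [Int.floor_lt]; push_cast; linarith [Int.lt_floor_add_one y]
  omega

theorem binaryValue_strPrefix_binaryDigits {x : ℝ} (hx : x ∈ Set.Ico (0 : ℝ) 1) (n : ℕ) :
    (binaryValue (strPrefix (binaryDigits x) n) : ℤ) = ⌊x * 2 ^ n⌋ := by
  induction n with
  | zero =>
    have : ⌊x⌋ = 0 := by rw [Int.floor_eq_iff]; simpa using hx
    simp [strPrefix, binaryValue, this]
  | succ n ih =>
    have hdouble : x * 2 ^ (n + 1) = 2 * (x * 2 ^ n) := by ring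
    rw [strPrefix_succ, binaryValue_concat]
    push_cast
    rw [ih, hdouble, floor_two_mul (x * 2 ^ n), binaryDigits, hdouble]
    rcases Int.emod_two_eq_zero_or_one ⌊2 * (x * 2 ^ n)⌋ with h | h <;> simp [h, natOfBool]

theorem strPrefix_binaryDigits_eq_iff {x : ℝ} (hx : x ∈ Set.Ico (0 : ℝ) 1) (σ : List Bool) :
    strPrefix (binaryDigits x) σ.length = σ ↔ ⌊x * 2 ^ σ.length⌋ = binaryValue σ := by
  rw [← binaryValue_strPrefix_binaryDigits hx]
  exact ⟨fun h => by rw [h], fun h => eq_of_binaryValue_eq (by simp) (by exact_mod_cast h)⟩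

theorem measurable_binaryDigits : Measurable binaryDigits := by
  refine measurable_pi_iff.2 fun n => measurable_to_bool ?_
  have hfloor : Measurable fun x : ℝ => ⌊x * 2 ^ (n + 1)⌋ :=
    Int.measurable_floor.comp (measurable_id.mul_const _)
  convert hfloor (MeasurableSet.of_discrete (s := {z : ℤ | z % 2 = 1})) using 1
  ext x
  simp [binaryDigits]

instance : IsProbabilityMeasure μCantor := by
  constructor
  rw [μCantor, Measure.map_apply measurable_binaryDigits MeasurableSet.univ]
  simp

theorem mem_cylinder_iff {σ : List Bool} {X : ℕ → Bool} :
    X ∈ _root_.cylinder σ ↔ strPrefix X σ.length = σ := isPrefixOf_iff σ X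

theorem measurableSet_apply_eq (n : ℕ) (b : Bool) : MeasurableSet {X : ℕ → Bool | X n = b} :=
  measurable_pi_apply (X := fun _ : ℕ => Bool) n (measurableSet_singleton b)

theorem measurableSet_cylinder (σ : List Bool) : MeasurableSet (_root_.cylinder σ) := by
  have : _root_.cylinder σ = ⋂ i : Fin σ.length, {X | X i = σ.get i} := by
    ext X; simp [_root_.cylinder, IsPrefixOf]
  rw [this]
  exact MeasurableSet.iInter fun i => measurableSet_apply_eq _ _

theorem binaryDigits_preimage_cylinder (σ : List Bool) :
    binaryDigits ⁻¹' (_root_.cylinder σ) ∩ Set.Ico (0 : ℝ) 1 =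
      Set.Ico ((binaryValue σ : ℝ) / 2 ^ σ.length) ((binaryValue σ + 1 : ℝ) / 2 ^ σ.length) := by
  have hp : (0 : ℝ) < 2 ^ σ.length := by positivity
  have hlt : (binaryValue σ : ℝ) + 1 ≤ 2 ^ σ.length := by exact_mod_cast binaryValue_lt σ
  have hsub : Set.Ico ((binaryValue σ : ℝ) / 2 ^ σ.length) ((binaryValue σ + 1 : ℝ) / 2 ^ σ.length)
      ⊆ Set.Ico 0 1 := Set.Ico_subset_Ico (by positivity) ((div_le_one hp).2 hlt)
  rw [← Set.inter_eq_left.2 hsub]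
  ext x
  refine and_congr_left fun hx => ?_
  rw [Set.mem_preimage, mem_cylinder_iff, strPrefix_binaryDigits_eq_iff hx, Int.floor_eq_iff,
    Set.mem_Ico, div_le_iff₀ hp, lt_div_iff₀ hp, Int.cast_natCast]

theorem measure_cylinder (σ : List Bool) :
    μCantor.real (_root_.cylinder σ) = (2 ^ σ.length)⁻¹ := by
  have hmeas := measurableSet_cylinder σ
  rw [Measure.real, μCantor, Measure.map_apply measurable_binaryDigits hmeas,
    Measure.restrict_apply (measurable_binaryDigits hmeas), binaryDigits_preimage_cylinder,
    Real.volume_Ico, ← sub_div, add_sub_cancel_left, ENNReal.toReal_ofReal (by positivity), one_div]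

theorem disjoint_cylinder {σ τ : List Bool} (h : ¬ σ <+: τ) (h' : ¬ τ <+: σ) :
    Disjoint (_root_.cylinder σ) (_root_.cylinder τ) := by
  rw [Set.disjoint_left]
  intro X hσ hτ
  rw [mem_cylinder_iff] at hσ hτ
  have isPrefix {ρ : List Bool} (hρ : strPrefix X ρ.length = ρ) {n : ℕ} (hn : ρ.length ≤ n) :
      ρ <+: strPrefix X n := List.prefix_iff_eq_take.2 (by rw [take_strPrefix X hn, hρ])
  exact (List.prefix_or_prefix_of_prefix (isPrefix hσ (le_max_left σ.length τ.length))
    (isPrefix hτ (le_max_right ..))).elim h h'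

/-- All binary strings of length `t`, listed primitive recursively. -/
def stringsOfLength : ℕ → List (List Bool)
  | 0 => [[]]
  | t + 1 => (stringsOfLength t).flatMap fun σ => [σ ++ [false], σ ++ [true]]

theorem mem_stringsOfLength {t : ℕ} {σ : List Bool} : σ ∈ stringsOfLength t ↔ σ.length = t := by
  induction t generalizing σ with
  | zero => simp [stringsOfLength]
  | succ t ih =>
    rcases List.eq_nil_or_concat' σ with rfl | ⟨τ, b, rfl⟩
    · simp [stringsOfLength]
    · cases b <;> simp [stringsOfLength, ih]

theorem nodup_stringsOfLength (t : ℕ) : (stringsOfLength t).Nodup := by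
  induction t with
  | zero => simp [stringsOfLength]
  | succ t ih =>
    rw [stringsOfLength, List.nodup_flatMap]
    refine ⟨fun σ _ => by simp, ih.imp fun {σ τ} hne => ?_⟩
    simp [Function.onFun, hne.symm]

theorem primrec_stringsOfLength : Primrec stringsOfLength := by
  refine (Primrec.nat_rec₁ (f := fun _ (l : List (List Bool)) =>
    l.flatMap fun σ => [σ ++ [false], σ ++ [true]]) [[]] ?_).of_eq fun t => ?_
  · refine Primrec.list_flatMap Primrec.snd ?_
    change Primrec fun q : (ℕ × List (List Bool)) × List Bool => [q.2 ++ [false], q.2 ++ [true]]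
    fun_prop
  · induction t with
    | zero => rfl
    | succ t ih => rw [stringsOfLength, ← ih]

open Classical in
/-- The number of strings of length `t` satisfying `f`. -/
noncomputable def countStrings (f : List Bool → Prop) (t : ℕ) : ℕ :=
  ((stringsOfLength t).filter fun σ => decide (f σ)).length

theorem primrec_countStrings {α : Type*} [Primcodable α] {f : α → List Bool → Prop} {g : α → ℕ}
    (hf : PrimrecPred fun q : α × List Bool => f q.1 q.2) (hg : Primrec g) :
    Primrec fun a => countStrings (f a) (g a) := by
  classical
  have hrel : PrimrecRel fun (σ : List Bool) (a : α) => f a σ :=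
    primrecPred_comp (f := fun q : List Bool × α => (q.2, q.1)) hf (by fun_prop)
  refine (Primrec.list_length.comp
    (hrel.listFilter.comp (primrec_stringsOfLength.comp hg) Primrec.id)).of_eq fun a => ?_
  simp only [countStrings, id]

open Classical in
theorem setOf_strPrefix_eq_biUnion (f : List Bool → Prop) (t : ℕ) : {X | f (strPrefix X t)} =
    ⋃ σ ∈ (stringsOfLength t).toFinset.filter f, _root_.cylinder σ := by
  ext X
  simp only [Set.mem_ofPred_eq, Finset.mem_filter, List.mem_toFinset, mem_stringsOfLength,
    Set.mem_iUnion, exists_prop, mem_cylinder_iff]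
  constructor
  · intro h
    exact ⟨_, ⟨length_strPrefix X t, h⟩, by rw [length_strPrefix]⟩
  · rintro ⟨σ, ⟨rfl, h⟩, hX⟩
    rwa [hX]

theorem measurableSet_strPrefix (f : List Bool → Prop) (t : ℕ) :
    MeasurableSet {X | f (strPrefix X t)} := by
  classical
  rw [setOf_strPrefix_eq_biUnion]
  exact Finset.measurableSet_biUnion _ fun σ _ => measurableSet_cylinder σ

theorem measure_strPrefix (f : List Bool → Prop) (t : ℕ) :
    μCantor.real {X | f (strPrefix X t)} = countStrings f t / 2 ^ t := by
  classical
  have hlen : ∀ σ ∈ (stringsOfLength t).toFinset.filter f, σ.length = t := fun σ hσ =>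
    mem_stringsOfLength.1 (List.mem_toFinset.1 (Finset.mem_filter.1 hσ).1)
  rw [setOf_strPrefix_eq_biUnion, measureReal_biUnion_finset
    (fun σ hσ τ hτ hne => disjoint_cylinder
      (fun h => hne (h.eq_of_length ((hlen σ hσ).trans (hlen τ hτ).symm)))
      fun h => hne (h.eq_of_length ((hlen τ hτ).trans (hlen σ hσ).symm)).symm)
    (fun σ _ => measurableSet_cylinder σ),
    Finset.sum_congr rfl fun σ hσ => by rw [measure_cylinder, hlen σ hσ],
    Finset.sum_const, nsmul_eq_mul, div_eq_mul_inv, countStrings,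
    ← List.toFinset_card_of_nodup ((nodup_stringsOfLength t).filter _), List.toFinset_filter]
  simp

theorem countStrings_concat_true (f : List Bool → Prop) (t : ℕ) :
    countStrings (fun τ => ∃ σ, f σ ∧ τ = σ ++ [true]) (t + 1) = countStrings f t := by
  simp only [countStrings, stringsOfLength]
  induction stringsOfLength t with
  | nil => simp
  | cons σ l ih =>
    by_cases hσ : f σ <;> simp_all

theorem measure_strPrefix_and_apply (f : List Bool → Prop) (t : ℕ) :
    μCantor.real {X | f (strPrefix X t) ∧ X t = true} =
      μCantor.real {X | f (strPrefix X t)} / 2 := by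
  have hext : {X : ℕ → Bool | f (strPrefix X t) ∧ X t = true} =
      {X | ∃ σ, f σ ∧ strPrefix X (t + 1) = σ ++ [true]} := by
    ext X
    simp only [strPrefix_succ, Set.mem_ofPred_eq, List.append_singleton_inj]
    exact ⟨fun h => ⟨_, h.1, rfl, h.2⟩, fun ⟨_, hσ, hX, h⟩ => ⟨hX ▸ hσ, h⟩⟩
  rw [hext, measure_strPrefix fun τ => ∃ σ, f σ ∧ τ = σ ++ [true], countStrings_concat_true,
    measure_strPrefix, pow_succ, div_div]

/-- The class of sequences that are `true` at every position in `B`. -/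
def allTrueOn (B : Finset ℕ) : Set (ℕ → Bool) := {X | ∀ p ∈ B, X p = true}

theorem measurableSet_allTrueOn (B : Finset ℕ) : MeasurableSet (allTrueOn B) := by
  have : allTrueOn B = ⋂ p ∈ B, {X | X p = true} := by ext X; simp [allTrueOn]
  rw [this]
  exact Finset.measurableSet_biInter _ fun p _ => measurableSet_apply_eq _ _

theorem allTrueOn_union (B C : Finset ℕ) : allTrueOn (B ∪ C) = allTrueOn B ∩ allTrueOn C := by
  ext X
  exact Finset.forall_mem_union

theorem measure_allTrueOn (B : Finset ℕ) : μCantor.real (allTrueOn B) = (2 ^ B.card)⁻¹ := by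
  induction B using Finset.induction_on_max with
  | empty => simp [allTrueOn]
  | insert p B hp ih =>
    have hB : allTrueOn B = {X | ∀ q ∈ B, (strPrefix X p)[q]? = some true} := by
      ext X
      refine forall₂_congr fun q hq => ?_
      rw [getElem?_strPrefix X (hp q hq), Option.some_inj]
    have hinsert : allTrueOn (insert p B) =
        {X | (∀ q ∈ B, (strPrefix X p)[q]? = some true) ∧ X p = true} := by
      ext X
      exact (Finset.forall_mem_insert ..).trans
        (and_comm.trans (and_congr_left fun _ => Set.ext_iff.1 hB X))
    rw [hinsert, measure_strPrefix_and_apply fun σ => ∀ q ∈ B, σ[q]? = some true, ← hB, ih,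
      Finset.card_insert_of_notMem fun hB => lt_irrefl p (hp p hB), pow_succ, mul_inv,
      div_eq_mul_inv]

theorem indepSet_allTrueOn {B C : Finset ℕ} (h : Disjoint B C) :
    ProbabilityTheory.IndepSet (allTrueOn B) (allTrueOn C) μCantor := by
  rw [ProbabilityTheory.indepSet_iff_measure_inter_eq_mul (measurableSet_allTrueOn B)
    (measurableSet_allTrueOn C) μCantor,
    ← ENNReal.toReal_eq_toReal_iff' (by finiteness) (by finiteness), ENNReal.toReal_mul]
  change μCantor.real _ = μCantor.real _ * μCantor.real _
  rw [← allTrueOn_union, measure_allTrueOn, measure_allTrueOn, measure_allTrueOn,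
    Finset.card_union_of_disjoint h, pow_add, mul_inv]

section SecondMoment

open ProbabilityTheory

variable {Ω ι : Type*} {mΩ : MeasurableSpace Ω} {ν : Measure Ω}

theorem indepFun_indicator_one {C C' : Set Ω} (h : IndepSet C C' ν) :
    IndepFun (C.indicator fun _ => (1 : ℝ)) (C'.indicator fun _ => (1 : ℝ)) ν := by
  have measurableSet_self : ∀ S : Set Ω, MeasurableSet[.generateFrom {S}] S := fun S =>
    MeasurableSpace.measurableSet_generateFrom rfl
  have hC' : Measurable[.generateFrom {C'}] (C'.indicator fun _ => (1 : ℝ)) :=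
    measurable_const.indicator (measurableSet_self C')
  exact Indep.indicator_indepFun 1 (measurableSet_self C)
    (indep_of_indep_of_le_right h hC'.comap_le)

variable [IsProbabilityMeasure ν]

theorem memLp_indicator_one {C : Set Ω} (hC : MeasurableSet C) :
    MemLp (C.indicator fun _ => (1 : ℝ)) 2 ν :=
  memLp_indicator_const 2 hC 1 (Or.inr (measure_ne_top ν C))

theorem variance_indicator_one_le {C : Set Ω} (hC : MeasurableSet C) :
    Var[C.indicator fun _ => (1 : ℝ); ν] ≤ ν.real C := by
  refine (variance_le_expectation_sq (memLp_indicator_one hC).aestronglyMeasurable).trans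
    (le_of_eq ?_)
  rw [← integral_indicator_one hC]
  exact integral_congr_ae (.of_forall fun x => by
    by_cases hx : x ∈ C <;> simp [hx])

theorem setIntegral_sum_indicator_one {C : ι → Set Ω} (hC : ∀ i, MeasurableSet (C i))
    (F : Finset ι) (S : Set Ω) :
    ∫ x in S, (∑ i ∈ F, (C i).indicator (fun _ => (1 : ℝ))) x ∂ν = ∑ i ∈ F, ν.real (S ∩ C i) := by
  simp only [Finset.sum_apply]
  rw [integral_finsetSum F fun i _ =>
    ((memLp_indicator_one (hC i)).integrable one_le_two).integrableOn]
  refine Finset.sum_congr rfl fun i _ => ?_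
  rw [setIntegral_indicator (hC i), setIntegral_const, smul_eq_mul, mul_one]

theorem variance_sum_indicator_one_le {F : Finset ι} {C : ι → Set Ω}
    (hC : ∀ i, MeasurableSet (C i))
    (indep : (F : Set ι).Pairwise fun i j => IndepSet (C i) (C j) ν) :
    Var[∑ i ∈ F, (C i).indicator fun _ => (1 : ℝ); ν] ≤ ∑ i ∈ F, ν.real (C i) := by
  rw [IndepFun.variance_sum (fun i _ => memLp_indicator_one (hC i))
    fun i hi j hj hij => indepFun_indicator_one (indep hi hj hij)]
  exact Finset.sum_le_sum fun i _ => variance_indicator_one_le (hC i)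

-- The second moment method: the number `N` of events that occur has mean `M` and variance at most
-- `M`, but its mean over `P` is at most `M / 2`.
theorem sum_measure_mul_measure_le_four {F : Finset ι} {C : ι → Set Ω} {P : Set Ω}
    (hC : ∀ i, MeasurableSet (C i)) (indep : (F : Set ι).Pairwise fun i j => IndepSet (C i) (C j) ν)
    (hle : ∀ i ∈ F, ν.real (P ∩ C i) ≤ ν.real P / 2 * ν.real (C i)) :
    (∑ i ∈ F, ν.real (C i)) * ν.real P ≤ 4 := by
  set M := ∑ i ∈ F, ν.real (C i) with hM
  set N : Ω → ℝ := ∑ i ∈ F, (C i).indicator fun _ => 1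
  have M_nonneg : 0 ≤ M := Finset.sum_nonneg fun i _ => measureReal_nonneg
  have memLp : MemLp N 2 ν := memLp_finsetSum' F fun i _ => memLp_indicator_one (hC i)
  have integrable : Integrable N ν := memLp.integrable one_le_two
  have sq_integrable : Integrable (fun x => (N x - M) ^ 2) ν :=
    (memLp.sub (memLp_const M)).integrable_sq
  have variance_le : ∫ x, (N x - M) ^ 2 ∂ν ≤ M := by
    have mean : ∫ x, N x ∂ν = M := by
      simpa only [Measure.restrict_univ, Set.univ_inter] using
        setIntegral_sum_indicator_one (ν := ν) hC F Set.univ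
    have := variance_sum_indicator_one_le (ν := ν) hC indep
    rwa [variance_eq_integral memLp.aestronglyMeasurable.aemeasurable, mean] at this
  have lower : M * (M * ν.real P / 2) ≤ ∫ x in P, M * (M - N x) ∂ν := by
    have meets : ∑ i ∈ F, ν.real (P ∩ C i) ≤ ν.real P / 2 * M := by
      rw [hM, Finset.mul_sum]
      exact Finset.sum_le_sum hle
    rw [integral_const_mul, integral_sub (integrable_const _).integrableOn integrable.integrableOn,
      setIntegral_const, smul_eq_mul, setIntegral_sum_indicator_one hC]
    exact mul_le_mul_of_nonneg_left (by linarith) M_nonneg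
  have upper := calc ∫ x in P, M * (M - N x) ∂ν
    _ ≤ ∫ x in P, ((N x - M) ^ 2 + M ^ 2 / 4) ∂ν :=
        setIntegral_mono (((integrable_const M).sub integrable).const_mul M).integrableOn
          (sq_integrable.add (integrable_const _)).integrableOn
          fun x => by nlinarith only [sq_nonneg (N x - M / 2)]
    _ = ∫ x in P, (N x - M) ^ 2 ∂ν + M ^ 2 / 4 * ν.real P := by
        rw [integral_add sq_integrable.integrableOn (integrable_const _).integrableOn,
          setIntegral_const, smul_eq_mul, mul_comm (ν.real P)]
    _ ≤ M + M ^ 2 / 4 * ν.real P := by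
        gcongr
        exact (setIntegral_le_integral sq_integrable (.of_forall fun x => sq_nonneg _)).trans
          variance_le
  rcases M_nonneg.eq_or_lt with hz | hpos
  · rw [← hz, zero_mul]; norm_num
  · exact le_of_mul_le_mul_left (by linarith) hpos

end SecondMoment

/-! ### Effectively open classes and their measure -/

theorem isLocallyConstant_strPrefix (t : ℕ) : IsLocallyConstant fun X => strPrefix X t := by
  induction t with
  | zero => exact .const _
  | succ t ih =>
    have last : IsLocallyConstant fun X : ℕ → Bool => X t :=
      (IsLocallyConstant.iff_continuous _).2 (continuous_apply t)
    simpa only [strPrefix_succ] using ih.comp₂ last fun σ b => σ ++ [b]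

theorem mem_openOf_iff (S : Set (List Bool)) (X : ℕ → Bool) :
    X ∈ openOf S ↔ ∃ s, strPrefix X s ∈ S := by
  simp only [openOf, Set.mem_iUnion, exists_prop, ← exists_isPrefixOf_iff]
  exact exists_congr fun σ => and_comm

theorem isOpen_openOf (S : Set (List Bool)) : IsOpen (openOf S) := by
  have eq : openOf S = ⋃ s, (fun X => strPrefix X s) ⁻¹' S := by
    ext X
    simp only [mem_openOf_iff, Set.mem_iUnion, Set.mem_preimage]
  exact eq ▸ isOpen_iUnion fun s => isLocallyConstant_strPrefix s S

theorem measurableSet_openOf (S : Set (List Bool)) : MeasurableSet (openOf S) :=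
  (isOpen_openOf S).measurableSet

theorem measureReal_iInter_lt_iff {Ω : Type*} [MeasurableSpace Ω] {ν : Measure Ω}
    [IsFiniteMeasure ν] {S : ℕ → Set Ω} (hS : Antitone S) (meas : ∀ n, MeasurableSet (S n))
    (r : ℝ) :
    ν.real (⋂ n, S n) < r ↔ ∃ n, ν.real (S n) < r := by
  refine ⟨fun h => ?_, fun ⟨n, hn⟩ => (measureReal_mono (Set.iInter_subset S n)).trans_lt hn⟩
  have lim : Filter.Tendsto (fun n => ν.real (S n)) .atTop (nhds (ν.real (⋂ n, S n))) :=
    (ENNReal.tendsto_toReal (measure_ne_top ν _)).comp <| tendsto_measure_iInter_atTop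
      (fun n => (meas n).nullMeasurableSet) hS ⟨0, measure_ne_top ν _⟩
  exact (lim.eventually_lt_const h).exists

theorem Sigma01In.measure_compl_openOf_lt {α : Type*} [Primcodable α] {p : α → List Bool → Prop}
    (hp : Sigma01In emptyOracle fun q : α × List Bool => p q.1 q.2) {g : α → ℕ} (hg : Primrec g) :
    Sigma01In emptyOracle fun a => μCantor.real (openOf {σ | p a σ})ᶜ < (2 ^ g a)⁻¹ := by
  obtain ⟨f, hf, enum⟩ := hp.exists_primrecPred
  have p_iff (a : α) (σ : List Bool) : p a σ ↔ ∃ u, f ((a, σ), u) := enum (a, σ)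
  let survives (a : α) (σ : List Bool) : Prop :=
    ∀ i < σ.length + 1, ∀ u < σ.length + 1, ¬ f ((a, σ.take i), u)
  have hsurvives : PrimrecPred fun q : α × List Bool => survives q.1 q.2 := by
    apply primrecPred_forall_lt <;> [apply primrecPred_forall_lt; skip] <;> fun_prop
  let S (a : α) (t : ℕ) : Set (ℕ → Bool) := {X | survives a (strPrefix X t)}
  have mem_S (a : α) (t : ℕ) (X : ℕ → Bool) :
      X ∈ S a t ↔ ∀ i ≤ t, ∀ u ≤ t, ¬ f ((a, strPrefix X i), u) := by
    simp only [S, survives, Set.mem_ofPred_eq, length_strPrefix, Nat.lt_succ_iff]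
    exact forall₂_congr fun i hi => by rw [take_strPrefix X hi]
  have antitone_S (a : α) : Antitone (S a) := fun s t hst X hX => by
    rw [mem_S] at hX ⊢
    exact fun i hi u hu => hX i (hi.trans hst) u (hu.trans hst)
  have compl_eq (a : α) : (openOf {σ | p a σ})ᶜ = ⋂ t, S a t := by
    ext X
    simp only [Set.mem_compl_iff, mem_openOf_iff, Set.mem_ofPred_eq, p_iff, Set.mem_iInter, mem_S,
      not_exists]
    exact ⟨fun h t i _ u _ => h i u,
      fun h i u => h (max i u) i (le_max_left i u) u (le_max_right i u)⟩
  have hcount : Primrec fun q : α × ℕ => countStrings (survives q.1) q.2 :=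
    primrec_countStrings (f := fun q : α × ℕ => survives q.1)
      (hsurvives.comp (f := fun q : (α × ℕ) × List Bool => (q.1.1, q.2)) (by fun_prop))
      (by fun_prop)
  refine (Sigma01In.exists_nat (p := fun a t => countStrings (survives a) t * 2 ^ g a < 2 ^ t)
    (.of_primrecPred (by fun_prop))).of_iff fun a => ?_
  rw [compl_eq, measureReal_iInter_lt_iff (antitone_S a) fun t => measurableSet_strPrefix _ t]
  refine exists_congr fun t => ?_
  rw [measure_strPrefix, div_lt_iff₀ (by positivity), inv_mul_eq_div, lt_div_iff₀ (by positivity)]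
  norm_cast

/-! ### Finite lists of constraints -/

/-- The `a`-th section of the `e`-th c.e. set, as an effectively open class. -/
def ceOpen (e a : ℕ) : Set (ℕ → Bool) :=
  openOf {σ | WEnum e (Nat.pair (Encodable.encode σ) a)}

/-- The computation putting extensions of `σ` into `ceOpen e a` halts by stage `k`. -/
def EntersBy (e a k : ℕ) (σ : List Bool) : Prop :=
  ∃ i < k + 1, Nat.Partrec.Code.evaln k (Denumerable.ofNat _ e)
    (Nat.pair (Encodable.encode (σ.take i)) a) ≠ none

/-- The string `σ` shows that its extensions violate the constraint `c = (e, a, k)`, which for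
`k = 0` forbids `ceOpen e a` and for `k > 0` requires membership in its `k`-th approximation. The
two cases share an encoding so that a stage of the construction searches for a single number. -/
def Violates (c : ℕ × ℕ × ℕ) (σ : List Bool) : Prop :=
  c.2.2 = 0 ∧ WEnum c.1 (Nat.pair (Encodable.encode σ) c.2.1) ∨
    c.2.2 ≠ 0 ∧ σ.length = c.2.2 ∧ ¬ EntersBy c.1 c.2.1 c.2.2 σ

/-- The `Π⁰₁` class of sequences satisfying every constraint in the list `L`. -/
def constraintClass (L : List (ℕ × ℕ × ℕ)) : Set (ℕ → Bool) :=
  (openOf {σ | ∃ c ∈ L, Violates c σ})ᶜ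

/-- The class of `L` has measure at least `2⁻ᵈ`; all classes of the construction stay large for
some known `d`. -/
def Large (L : List (ℕ × ℕ × ℕ)) (d : ℕ) : Prop :=
  (2 ^ d)⁻¹ ≤ μCantor.real (constraintClass L)

theorem mem_ceOpen_iff (e a : ℕ) (X : ℕ → Bool) :
    X ∈ ceOpen e a ↔ ∃ s, WEnum e (Nat.pair (Encodable.encode (strPrefix X s)) a) :=
  mem_openOf_iff _ X

theorem measurableSet_ceOpen (e a : ℕ) : MeasurableSet (ceOpen e a) := measurableSet_openOf _

theorem exists_ceOpen_eq {α : Type*} [Primcodable α] [Inhabited α] {p : α → List Bool → Prop}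
    (hp : Sigma01In emptyOracle fun q : α × List Bool => p q.1 q.2) :
    ∃ e, ∀ a, ceOpen e (Encodable.encode a) = openOf {σ | p a σ} := by
  obtain ⟨e, he⟩ := (hp.comp (g := fun n : ℕ =>
    (decodeD α n.unpair.2, decodeD (List Bool) n.unpair.1)) (by fun_prop)).exists_wEnum_encode_iff
  refine ⟨e, fun a => congrArg openOf (Set.ext fun σ => ?_)⟩
  simpa using he (Nat.pair (Encodable.encode σ) (Encodable.encode a))

theorem entersBy_strPrefix_iff (e a k : ℕ) (X : ℕ → Bool) :
    EntersBy e a k (strPrefix X k) ↔ ∃ i ≤ k, Nat.Partrec.Code.evaln k (Denumerable.ofNat _ e)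
      (Nat.pair (Encodable.encode (strPrefix X i)) a) ≠ none := by
  simp only [EntersBy, Nat.lt_succ_iff]
  exact exists_congr fun i => and_congr_right fun hi => by rw [take_strPrefix X hi]

theorem evaln_ne_none_mono {k l : ℕ} (h : k ≤ l) {c : Nat.Partrec.Code} {n : ℕ}
    (hk : Nat.Partrec.Code.evaln k c n ≠ none) : Nat.Partrec.Code.evaln l c n ≠ none := by
  obtain ⟨y, hy⟩ := Option.ne_none_iff_exists'.1 hk
  exact Option.ne_none_iff_exists'.2 ⟨y, Nat.Partrec.Code.evaln_mono h hy⟩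

theorem entersBy_mono (e a : ℕ) (X : ℕ → Bool) :
    Monotone fun k => EntersBy e a k (strPrefix X k) := fun k l hkl h => by
  obtain ⟨i, hi, hk⟩ := (entersBy_strPrefix_iff ..).1 h
  refine (entersBy_strPrefix_iff ..).2 ?_
  exact ⟨i, hi.trans hkl, evaln_ne_none_mono hkl hk⟩

theorem mem_ceOpen_iff_exists_entersBy (e a : ℕ) (X : ℕ → Bool) :
    X ∈ ceOpen e a ↔ ∃ k, EntersBy e a (k + 1) (strPrefix X (k + 1)) := by
  simp only [mem_ceOpen_iff, wEnum_iff_evaln]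
  constructor
  · rintro ⟨s, k, hk⟩
    refine ⟨max s k, (entersBy_strPrefix_iff ..).2 ⟨s, by omega, evaln_ne_none_mono (by omega) hk⟩⟩
  · rintro ⟨k, hk⟩
    obtain ⟨i, -, hi⟩ := (entersBy_strPrefix_iff ..).1 hk
    exact ⟨i, k + 1, hi⟩

theorem mem_constraintClass_iff (L : List (ℕ × ℕ × ℕ)) (X : ℕ → Bool) :
    X ∈ constraintClass L ↔ ∀ c ∈ L, ∀ s, ¬ Violates c (strPrefix X s) := by
  simp only [constraintClass, Set.mem_compl_iff, mem_openOf_iff, Set.mem_ofPred_eq, not_exists,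
    not_and]
  exact ⟨fun h c hc s => h s c hc, fun h s c hc => h c hc s⟩

theorem constraintClass_nil : constraintClass [] = Set.univ := by
  ext X
  simp [mem_constraintClass_iff]

theorem isClosed_constraintClass (L : List (ℕ × ℕ × ℕ)) : IsClosed (constraintClass L) :=
  (isOpen_openOf _).isClosed_compl

theorem constraintClass_anti {L L' : List (ℕ × ℕ × ℕ)} (h : L ⊆ L') :
    constraintClass L' ⊆ constraintClass L := fun X hX => by
  rw [mem_constraintClass_iff] at hX ⊢
  exact fun c hc => hX c (h hc)

theorem constraintClass_cons_zero (e a : ℕ) (L : List (ℕ × ℕ × ℕ)) :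
    constraintClass ((e, a, 0) :: L) = constraintClass L \ ceOpen e a := by
  ext X
  simp [mem_constraintClass_iff, mem_ceOpen_iff, Violates, and_comm]

theorem constraintClass_cons_succ (e a k : ℕ) (L : List (ℕ × ℕ × ℕ)) :
    constraintClass ((e, a, k + 1) :: L) =
      constraintClass L ∩ {X | EntersBy e a (k + 1) (strPrefix X (k + 1))} := by
  ext X
  simp [mem_constraintClass_iff, Violates, and_comm]

theorem mem_ceOpen_iff_of_mem_constraintClass {L : List (ℕ × ℕ × ℕ)} {X : ℕ → Bool}
    (hX : X ∈ constraintClass L) {e a k : ℕ} (hc : (e, a, k) ∈ L) :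
    X ∈ ceOpen e a ↔ k ≠ 0 := by
  have hX' : X ∈ constraintClass [(e, a, k)] :=
    constraintClass_anti (List.cons_subset.2 ⟨hc, List.nil_subset _⟩) hX
  cases k with
  | zero => simpa using (constraintClass_cons_zero e a [] ▸ hX').2
  | succ k =>
    have enters := (constraintClass_cons_succ e a k [] ▸ hX').2
    exact iff_of_true ((mem_ceOpen_iff_exists_entersBy ..).2 ⟨k, enters⟩) k.succ_ne_zero

theorem primrecPred_entersBy : PrimrecPred fun q : (ℕ × ℕ × ℕ) × List Bool =>
    EntersBy q.1.1 q.1.2.1 q.1.2.2 q.2 := by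
  apply primrecPred_exists_lt <;> fun_prop

theorem sigma01In_violates : Sigma01In emptyOracle fun q : (ℕ × ℕ × ℕ) × List Bool =>
    Violates q.1 q.2 :=
  ((Sigma01In.of_primrecPred (by fun_prop)).and (sigma01In_wEnum.comp
    (g := fun q : (ℕ × ℕ × ℕ) × List Bool =>
      (q.1.1, Nat.pair (Encodable.encode q.2) q.1.2.1)) (by fun_prop))).or
    ((Sigma01In.of_primrecPred (by fun_prop)).and
      ((Sigma01In.of_primrecPred (by fun_prop)).and (.of_primrecPred primrecPred_entersBy.not)))

theorem sigma01In_not_large : Sigma01In emptyOracle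
    fun q : List (ℕ × ℕ × ℕ) × ℕ => ¬ Large q.1 q.2 := by
  have mem (L : List (ℕ × ℕ × ℕ)) (σ : List Bool) :
      (∃ i < L.length, Violates (L.getD i default) σ) ↔ ∃ c ∈ L, Violates c σ := by
    simp only [List.exists_mem_iff_getElem]
    refine exists_congr fun i => ⟨fun ⟨h, hv⟩ => ⟨h, ?_⟩, fun ⟨h, hv⟩ => ⟨h, ?_⟩⟩ <;>
      simpa only [List.getD_eq_getElem _ _ h] using hv
  have hviolates : Sigma01In emptyOracle fun q : (List (ℕ × ℕ × ℕ) × ℕ) × List Bool =>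
      ∃ c ∈ q.1.1, Violates c q.2 :=
    (Sigma01In.exists_lt (sigma01In_violates.comp
      (g := fun q : ((List (ℕ × ℕ × ℕ) × ℕ) × List Bool) × ℕ =>
        (q.1.1.1.getD q.2 default, q.1.2)) (by fun_prop))
      (g := fun q => q.1.1.length) (by fun_prop)).of_iff fun q => mem q.1.1 q.2
  exact (hviolates.measure_compl_openOf_lt (p := fun (q : List (ℕ × ℕ × ℕ) × ℕ) σ =>
    ∃ c ∈ q.1, Violates c σ) (g := fun q => q.2) (by fun_prop)).of_iff fun q => not_le.symm

theorem delta01In_large {α : Type*} [Primcodable α] {f : α → List (ℕ × ℕ × ℕ)} {d : α → ℕ}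
    (hf : Primrec f) (hd : Primrec d) : Delta01In zeroJump fun a => Large (f a) (d a) :=
  ((sigma01In_not_large.delta01In_jump).not.comp (hf.pair hd)).of_iff fun _ => not_not

/-! ### Extending a list of constraints -/

theorem natOfBool_inj {b c : Bool} : natOfBool b = natOfBool c ↔ b = c := by
  cases b <;> cases c <;> simp [natOfBool]

theorem inv_two_pow_succ_add (d : ℕ) : ((2 : ℝ) ^ (d + 1))⁻¹ + (2 ^ (d + 1))⁻¹ = (2 ^ d)⁻¹ := by
  rw [pow_succ, mul_inv]
  ring

section Extension

variable {L : List (ℕ × ℕ × ℕ)} {d : ℕ}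

theorem large_nil : Large [] 0 := by
  simp [Large, constraintClass_nil]

theorem Large.nonempty (h : Large L d) : (constraintClass L).Nonempty := by
  rw [Set.nonempty_iff_ne_empty]
  rintro empty
  rw [Large, empty, measureReal_empty] at h
  exact absurd h (not_le.2 (by positivity))

theorem exists_large_cons_of_lt_measure_inter {e a : ℕ}
    (h : (2 ^ d)⁻¹ < μCantor.real (constraintClass L ∩ ceOpen e a)) :
    ∃ k ≠ 0, Large ((e, a, k) :: L) d := by
  let S (k : ℕ) : Set (ℕ → Bool) := {X | EntersBy e a (k + 1) (strPrefix X (k + 1))}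
  have hS : Monotone fun k => constraintClass L ∩ S k := fun k l hkl => by
    exact Set.inter_subset_inter_right _ fun X => entersBy_mono e a X (Nat.succ_le_succ hkl)
  have union : constraintClass L ∩ ceOpen e a = ⋃ k, constraintClass L ∩ S k := by
    rw [← Set.inter_iUnion]
    congr 1
    ext X
    simp only [mem_ceOpen_iff_exists_entersBy, Set.mem_iUnion, S, Set.mem_ofPred_eq]
  have lim : Filter.Tendsto (fun k => μCantor.real (constraintClass L ∩ S k)) .atTop
      (nhds (μCantor.real (constraintClass L ∩ ceOpen e a))) :=
    union ▸ (ENNReal.tendsto_toReal (measure_ne_top _ _)).comp (tendsto_measure_iUnion_atTop hS)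
  obtain ⟨k, hk⟩ := (lim.eventually_const_lt h).exists
  exact ⟨k + 1, k.succ_ne_zero, by simpa only [Large, constraintClass_cons_succ] using hk.le⟩

namespace Large

theorem lt_measure_inter_or (h : Large L d) (e a : ℕ) :
    (2 ^ (d + 1))⁻¹ < μCantor.real (constraintClass L ∩ ceOpen e a) ∨
      Large ((e, a, 0) :: L) (d + 1) := by
  have split := measureReal_inter_add_sdiff (μ := μCantor)
    (s := constraintClass L) (measurableSet_ceOpen e a)
  rw [or_iff_not_imp_left, not_lt]
  unfold Large at h ⊢
  rw [constraintClass_cons_zero]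
  intro le
  linarith [inv_two_pow_succ_add d]

theorem cons_zero_of_measure_le (h : Large L d) {e a : ℕ}
    (le : μCantor.real (ceOpen e a) ≤ (2 ^ (d + 1))⁻¹) : Large ((e, a, 0) :: L) (d + 1) :=
  (h.lt_measure_inter_or e a).resolve_left
    ((measureReal_mono Set.inter_subset_right).trans le).not_gt

theorem exists_cons (h : Large L d) (e a : ℕ) :
    ∃ k, Large ((e, a, k) :: L) (d + 1) ∧ (k ≠ 0 → ¬ Large ((e, a, 0) :: L) (d + 1)) := by
  by_cases h0 : Large ((e, a, 0) :: L) (d + 1)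
  · exact ⟨0, h0, fun hk => absurd rfl hk⟩
  · obtain ⟨k, -, hk⟩ := exists_large_cons_of_lt_measure_inter
      ((h.lt_measure_inter_or e a).resolve_right h0)
    exact ⟨k, hk, fun _ => h0⟩

/-- If the functional `e` could not be made to disagree with `D` inside the class of `L`, then
`D m` would be the only value `v` whose axioms cannot be avoided, and `D` would be computable. -/
theorem exists_cons_disagree (h : Large L d) {D : ℕ → Bool} (hD : ¬ ComputableSet D) (e : ℕ) :
    ∃ m v k, (k = 0 ↔ v = natOfBool (D m)) ∧ Large ((e, Nat.pair m v, k) :: L) (d + 1) := by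
  by_contra! hnone
  have value_iff (m v : ℕ) :
      v = natOfBool (D m) ↔ ¬ Large ((e, Nat.pair m v, 0) :: L) (d + 1) := by
    refine ⟨fun hv => hnone m v 0 (by simp [hv]), fun hlarge => by_contra fun hv => ?_⟩
    obtain ⟨k, hk, hlarge'⟩ := exists_large_cons_of_lt_measure_inter
      ((h.lt_measure_inter_or e (Nat.pair m v)).resolve_right hlarge)
    exact hnone m v k (by simp [hk, hv]) hlarge'
  have value (b : Bool) : Sigma01In emptyOracle fun m => D m = b :=
    (sigma01In_not_large.comp (g := fun m : ℕ =>
      ((e, Nat.pair m (natOfBool b), 0) :: L, d + 1)) (by fun_prop)).of_iff fun m => by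
        rw [← value_iff, natOfBool_inj, eq_comm]
  exact hD (turingLE_iff.2 ⟨value true, by simpa only [Bool.not_eq_true] using value false⟩)

end Large

end Extension

/-! ### The Kraft–Chaitin theorem -/

theorem PrefixFreeSet.sum_inv_two_pow_length_le_one {F : Finset (List Bool)}
    (hF : PrefixFreeSet (F : Set (List Bool))) : ∑ σ ∈ F, ((2 : ℝ) ^ σ.length)⁻¹ ≤ 1 := by
  have disjoint : (F : Set (List Bool)).PairwiseDisjoint _root_.cylinder := fun σ hσ τ hτ hne =>
    disjoint_cylinder (fun h => hne (hF σ hσ τ hτ h)) fun h => hne (hF τ hτ σ hσ h).symm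
  calc ∑ σ ∈ F, ((2 : ℝ) ^ σ.length)⁻¹
    _ = μCantor.real (⋃ σ ∈ F, _root_.cylinder σ) := by
        rw [measureReal_biUnion_finset disjoint fun σ _ => measurableSet_cylinder σ]
        exact Finset.sum_congr rfl fun σ _ => (measure_cylinder σ).symm
    _ ≤ 1 := measureReal_le_one

theorem primrec_binaryValue : Primrec binaryValue :=
  Primrec.list_foldl (f := id) (g := fun _ => 0)
    (h := fun (_ : List Bool) (p : ℕ × Bool) => 2 * p.1 + natOfBool p.2)
    Primrec.id (Primrec.const 0)
    (Primrec.nat_add.comp (Primrec.nat_mul.comp (Primrec.const 2) (by fun_prop))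
      ((Primrec.dom_finite natOfBool).comp (by fun_prop)))

section Requests

variable (len : ℕ → ℕ)

/-- The measure `∑ i < j, 2^(-len i)` allotted before request `j`, as a numerator and the exponent
of a power-of-two denominator. -/
def allotted (j : ℕ) : ℕ × ℕ :=
  j.rec (0, 0) fun i q => (q.1 * 2 ^ len i + 2 ^ q.2, q.2 + len i)

/-- The left endpoint, in units of `2^(-(len j + 1))`, of a dyadic interval contained in the `j`-th
allotted interval; the extra bit of length leaves room for rounding up. -/
def dyadicIndex (j : ℕ) : ℕ :=
  (allotted len j).1 * 2 ^ (len j + 1) / 2 ^ (allotted len j).2 + 1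

/-- `σ` is the program serving request `j` in the Kraft–Chaitin machine. -/
def IsProgramFor (j : ℕ) (σ : List Bool) : Prop :=
  σ.length = len j + 1 ∧ binaryValue σ = dyadicIndex len j

variable {len}

theorem primrec_dyadicIndex (hlen : Primrec len) : Primrec (dyadicIndex len) := by
  have : Primrec (allotted len) := Primrec.nat_rec₁ _ <| by
    change Primrec fun q : ℕ × ℕ × ℕ => (q.2.1 * 2 ^ len q.1 + 2 ^ q.2.2, q.2.2 + len q.1)
    fun_prop
  unfold dyadicIndex
  fun_prop

theorem allotted_div (j : ℕ) : ((allotted len j).1 : ℝ) / 2 ^ (allotted len j).2 =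
    ∑ i ∈ Finset.range j, ((2 : ℝ) ^ len i)⁻¹ := by
  induction j with
  | zero => simp [allotted]
  | succ j ih =>
    rw [Finset.sum_range_succ, ← ih]
    simp only [allotted]
    push_cast
    field_simp
    ring

theorem lt_dyadicIndex_div (j : ℕ) : ∑ i ∈ Finset.range j, ((2 : ℝ) ^ len i)⁻¹ <
    dyadicIndex len j / 2 ^ (len j + 1) := by
  rw [← allotted_div, div_lt_div_iff₀ (by positivity) (by positivity),
    ← div_lt_iff₀ (by positivity)]
  have := Nat.lt_floor_add_one (((allotted len j).1 * 2 ^ (len j + 1) : ℕ) /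
    ((2 ^ (allotted len j).2 : ℕ) : ℝ))
  rw [Nat.floor_div_eq_div] at this
  simpa [dyadicIndex] using this

theorem dyadicIndex_succ_div_le (j : ℕ) : (dyadicIndex len j + 1 : ℝ) / 2 ^ (len j + 1) ≤
    ∑ i ∈ Finset.range (j + 1), ((2 : ℝ) ^ len i)⁻¹ := by
  have floor_le : (((allotted len j).1 * 2 ^ (len j + 1) / 2 ^ (allotted len j).2 : ℕ) : ℝ) ≤
      (allotted len j).1 * 2 ^ (len j + 1) / 2 ^ (allotted len j).2 :=
    Nat.cast_div_le.trans_eq (by push_cast; rfl)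
  rw [Finset.sum_range_succ, ← allotted_div, div_le_iff₀ (by positivity), add_mul]
  calc (dyadicIndex len j + 1 : ℝ)
    _ = ((allotted len j).1 * 2 ^ (len j + 1) / 2 ^ (allotted len j).2 : ℕ) + 2 := by
        rw [dyadicIndex]; push_cast; ring
    _ ≤ _ := by
        gcongr
        · exact floor_le.trans_eq (by ring)
        · rw [pow_succ, inv_mul_cancel_left₀ (by positivity)]

theorem IsProgramFor.exists (hsum : ∀ N, ∑ j ∈ Finset.range N, ((2 : ℝ) ^ len j)⁻¹ ≤ 1) (j : ℕ) :
    ∃ σ, IsProgramFor len j σ := by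
  have hx : (dyadicIndex len j : ℝ) / 2 ^ (len j + 1) ∈ Set.Ico (0 : ℝ) 1 :=
    ⟨by positivity, lt_of_lt_of_le (by gcongr; linarith)
      ((dyadicIndex_succ_div_le j).trans (hsum (j + 1)))⟩
  refine ⟨strPrefix (binaryDigits (dyadicIndex len j / 2 ^ (len j + 1))) (len j + 1),
    length_strPrefix .., ?_⟩
  have := binaryValue_strPrefix_binaryDigits hx (len j + 1)
  rw [div_mul_cancel₀ _ (by positivity), Int.floor_natCast] at this
  exact_mod_cast this

theorem IsProgramFor.mem_Ioo {i j : ℕ} {σ τ : List Bool} (hσ : IsProgramFor len i σ)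
    (hτ : IsProgramFor len j τ) (h : σ <+: τ) : (dyadicIndex len j : ℝ) / 2 ^ (len j + 1) ∈
      Set.Ioo (∑ l ∈ Finset.range i, ((2 : ℝ) ^ len l)⁻¹)
        (∑ l ∈ Finset.range (i + 1), ((2 : ℝ) ^ len l)⁻¹) := by
  set x : ℝ := dyadicIndex len j / 2 ^ (len j + 1) with hxdef
  have hx : x ∈ Set.Ico (0 : ℝ) 1 := ⟨by positivity, by
    rw [hxdef, ← hτ.1, ← hτ.2, div_lt_one (by positivity)]; exact_mod_cast binaryValue_lt τ⟩
  have hτx : strPrefix (binaryDigits x) τ.length = τ := by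
    rw [strPrefix_binaryDigits_eq_iff hx, hxdef, hτ.1, div_mul_cancel₀ _ (by positivity),
      Int.floor_natCast, hτ.2]
  have hσx : strPrefix (binaryDigits x) σ.length = σ := by
    rw [← take_strPrefix _ h.length_le, hτx, ← List.prefix_iff_eq_take.1 h]
  rw [strPrefix_binaryDigits_eq_iff hx, Int.floor_eq_iff, hσ.1, hσ.2, Int.cast_natCast,
    ← div_le_iff₀ (by positivity), ← lt_div_iff₀ (by positivity)] at hσx
  exact ⟨(lt_dyadicIndex_div i).trans_le hσx.1, hσx.2.trans_le (dyadicIndex_succ_div_le i)⟩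

theorem IsProgramFor.index_eq {i j : ℕ} {σ τ : List Bool} (hσ : IsProgramFor len i σ)
    (hτ : IsProgramFor len j τ) (h : σ <+: τ) : i = j := by
  have mono : Monotone fun n => ∑ l ∈ Finset.range n, ((2 : ℝ) ^ len l)⁻¹ :=
    (Finset.sum_mono_set_of_nonneg fun l => by positivity).comp Finset.range_mono
  have inside := hσ.mem_Ioo hτ h
  have inside' := hτ.mem_Ioo hτ List.prefix_rfl
  exact le_antisymm (Nat.lt_succ_iff.1 (mono.reflect_lt (inside.1.trans inside'.2)))
    (Nat.lt_succ_iff.1 (mono.reflect_lt (inside'.1.trans inside.2)))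

end Requests

theorem kcpx_le {e x : ℕ} {σ : List Bool} (he : PrefixFreeMachine e)
    (hx : x ∈ (Denumerable.ofNat Nat.Partrec.Code e).eval (Encodable.encode σ)) :
    Kcpx x ≤ σ.length + 2 * e + 2 :=
  Nat.sInf_le ⟨e, σ, he, hx, rfl⟩

theorem exists_prefixFreeMachine_of_sum_le_one {len out : ℕ → ℕ} (hlen : Primrec len)
    (hout : Primrec out) (hsum : ∀ N, ∑ j ∈ Finset.range N, ((2 : ℝ) ^ len j)⁻¹ ≤ 1) :
    ∃ e, PrefixFreeMachine e ∧ ∀ j, ∃ σ : List Bool, σ.length = len j + 1 ∧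
      out j ∈ (Denumerable.ofNat Nat.Partrec.Code e).eval (Encodable.encode σ) := by
  have hindex := primrec_dyadicIndex hlen
  have hvalue := primrec_binaryValue
  obtain ⟨M, hM⟩ := exists_code_search
    (g := fun q => IsProgramFor len q.2 (decodeD (List Bool) q.1)) (out := fun q => out q.2)
    (by unfold IsProgramFor; fun_prop) (by fun_prop)
  have dom (σ : List Bool) : (M.eval (Encodable.encode σ)).Dom ↔ ∃ j, IsProgramFor len j σ := by
    simpa only [decodeD_encode] using (hM (Encodable.encode σ)).1
  have prefixFree : PrefixFreeMachine (Encodable.encode M) := by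
    intro σ hσ τ hτ h
    simp only [machineDom, Denumerable.ofNat_encode, Set.mem_ofPred_eq, dom] at hσ hτ
    obtain ⟨⟨i, hi⟩, ⟨j, hj⟩⟩ := hσ, hτ
    obtain rfl := hi.index_eq hj h
    exact h.eq_of_length (hi.1.trans hj.1.symm)
  refine ⟨Encodable.encode M, prefixFree, fun j => ?_⟩
  obtain ⟨σ, hσ⟩ := IsProgramFor.exists hsum j
  obtain ⟨y, hy⟩ := Part.dom_iff_mem.1 ((dom σ).2 ⟨j, hσ⟩)
  obtain ⟨i, hi, rfl⟩ := (hM _).2 y hy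
  rw [decodeD_encode] at hi
  obtain rfl := hi.index_eq hσ List.prefix_rfl
  exact ⟨σ, hσ.1, (Denumerable.ofNat_encode M).symm ▸ hy⟩

theorem exists_kcpx_le_of_sum_le_one {len out : ℕ → ℕ} (hlen : Primrec len) (hout : Primrec out)
    (hsum : ∀ N, ∑ j ∈ Finset.range N, ((2 : ℝ) ^ len j)⁻¹ ≤ 1) :
    ∃ c, ∀ j, Kcpx (out j) ≤ len j + c := by
  obtain ⟨e, he, program⟩ := exists_prefixFreeMachine_of_sum_le_one hlen hout hsum
  refine ⟨2 * e + 3, fun j => ?_⟩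
  obtain ⟨σ, length, hσ⟩ := program j
  have := kcpx_le he hσ
  omega

theorem sum_inv_two_pow_add_two_le (F : Finset ℕ) : ∑ j ∈ F, ((2 : ℝ) ^ (j + 2))⁻¹ ≤ 2⁻¹ := by
  have term (j : ℕ) : ((2 : ℝ) ^ (j + 2))⁻¹ = 4⁻¹ * (1 / 2) ^ j := by
    rw [pow_add, mul_inv, one_div, inv_pow]
    ring
  have geometric := (summable_geometric_two).sum_le_tsum F fun j _ => by positivity
  rw [tsum_geometric_two] at geometric
  simp only [term, ← Finset.mul_sum]
  linarith

/-- Indices not carrying a genuine request are given the summable dummy lengths `j + 2`. -/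
theorem sum_inv_two_pow_ite_le_one {fresh : ℕ → Prop} [DecidablePred fresh] {len : ℕ → ℕ}
    {F : Finset ℕ} (h : ∑ j ∈ F with fresh j, ((2 : ℝ) ^ len j)⁻¹ ≤ 2⁻¹) :
    ∑ j ∈ F, ((2 : ℝ) ^ (if fresh j then len j else j + 2))⁻¹ ≤ 1 := by
  rw [← Finset.sum_filter_add_sum_filter_not F fresh,
    Finset.sum_congr rfl fun j hj => by rw [if_pos (Finset.mem_filter.1 hj).2],
    Finset.sum_congr (s₁ := F.filter fun j => ¬ fresh j) rfl fun j hj => by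
      rw [if_neg (Finset.mem_filter.1 hj).2]]
  linarith [sum_inv_two_pow_add_two_le (F.filter fun j => ¬ fresh j)]

section Enumeration

variable {α : Type*} [Primcodable α] [Inhabited α]

/-- Each element of a c.e. set is listed only at its first appearance in the enumeration. -/
theorem Sigma01In.exists_primrec_bijOn {p : α → Prop} (hp : Sigma01In emptyOracle p) :
    ∃ (fresh : ℕ → Prop) (g : ℕ → α), PrimrecPred fresh ∧ Primrec g ∧
      Set.BijOn g {j | fresh j} {a | p a} := by
  classical
  obtain ⟨f, hf, p_iff⟩ := hp.exists_primrecPred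
  let first (a : α) (u : ℕ) : Prop := f (a, u) ∧ ∀ v < u, ¬ f (a, v)
  have hfirst : PrimrecPred fun q : α × ℕ => first q.1 q.2 := by
    have : PrimrecPred fun q : α × ℕ => ∀ v < q.2, ¬ f (q.1, v) := by
      apply primrecPred_forall_lt <;> fun_prop
    fun_prop
  have first_unique {a : α} {u v : ℕ} (hu : first a u) (hv : first a v) : u = v :=
    le_antisymm (not_lt.1 fun h => hu.2 v h hv.1) (not_lt.1 fun h => hv.2 u h hu.1)
  let g (j : ℕ) : α := decodeD α j.unpair.1
  let fresh (j : ℕ) : Prop := first (g j) j.unpair.2 ∧ Encodable.encode (g j) = j.unpair.1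
  refine ⟨fresh, g, ?_, by fun_prop, fun j hj => (p_iff _).2 ⟨_, hj.1.1⟩, ?_, fun a ha => ?_⟩
  · have := primrecPred_comp (f := fun j : ℕ => (g j, j.unpair.2)) hfirst (by fun_prop)
    fun_prop
  · intro i hi j hj h
    refine Nat.pairEquiv.symm.injective (Prod.ext ?_ (first_unique hi.1 (h ▸ hj.1)))
    exact hi.2.symm.trans ((congrArg Encodable.encode h).trans hj.2)
  · have hwit := (p_iff a).1 ha
    refine ⟨Nat.pair (Encodable.encode a) (Nat.find hwit), ?_, by simp [g]⟩
    simp only [fresh, g, Set.mem_ofPred_eq, Nat.unpair_pair, decodeD_encode, and_true]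
    exact ⟨Nat.find_spec hwit, fun u => Nat.find_min hwit⟩

theorem exists_kcpx_le_of_sum_le {p : α → Prop} (hp : Sigma01In emptyOracle p) {len out : α → ℕ}
    (hlen : Primrec len) (hout : Primrec out) {q : ℕ}
    (hsum : ∀ F : Finset α, (∀ a ∈ F, p a) → ∑ a ∈ F, ((2 : ℝ) ^ len a)⁻¹ ≤ 2 ^ q) :
    ∃ c, ∀ a, p a → Kcpx (out a) ≤ len a + c := by
  classical
  obtain ⟨fresh, g, hfresh, hg, mapsTo, injOn, surjOn⟩ := hp.exists_primrec_bijOn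
  let len' (j : ℕ) : ℕ := if fresh j then len (g j) + (q + 1) else j + 2
  have hsum' (N : ℕ) : ∑ j ∈ Finset.range N, ((2 : ℝ) ^ len' j)⁻¹ ≤ 1 := by
    have inj : Set.InjOn g ((Finset.range N).filter fresh) :=
      injOn.mono fun j hj => (Finset.mem_filter.1 hj).2
    refine sum_inv_two_pow_ite_le_one ?_
    calc ∑ j ∈ Finset.range N with fresh j, ((2 : ℝ) ^ (len (g j) + (q + 1)))⁻¹
      _ = (∑ a ∈ ((Finset.range N).filter fresh).image g, ((2 : ℝ) ^ len a)⁻¹) *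
            (2 ^ (q + 1))⁻¹ := by
          simp only [Finset.sum_image inj, Finset.sum_mul, pow_add _ _ (q + 1), mul_inv]
      _ ≤ 2 ^ q * (2 ^ (q + 1))⁻¹ := by
          gcongr
          refine hsum _ fun a ha => ?_
          obtain ⟨j, hj, rfl⟩ := Finset.mem_image.1 ha
          exact mapsTo (Finset.mem_filter.1 hj).2
      _ = 2⁻¹ := by rw [pow_succ, mul_inv, mul_inv_cancel_left₀ (by positivity)]
  obtain ⟨c, hc⟩ := exists_kcpx_le_of_sum_le_one (len := len') (out := fun j => out (g j))
    (by fun_prop) (by fun_prop) hsum'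
  refine ⟨q + 1 + c, fun a ha => ?_⟩
  obtain ⟨j, hj, rfl⟩ := surjOn ha
  simpa [len', if_pos (show fresh j from hj), add_assoc] using hc j

end Enumeration

/-! ### Approximating the complexity of numbers from above -/

theorem exists_program_kcpx (x : ℕ) : ∃ e, ∃ σ : List Bool, PrefixFreeMachine e ∧
    x ∈ (Denumerable.ofNat Nat.Partrec.Code e).eval (Encodable.encode σ) ∧
    Kcpx x = σ.length + 2 * e + 2 := by
  have hsum (N : ℕ) : ∑ j ∈ Finset.range N, ((2 : ℝ) ^ (j + 2))⁻¹ ≤ 1 :=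
    (sum_inv_two_pow_add_two_le _).trans (by norm_num)
  obtain ⟨e, he, program⟩ := exists_prefixFreeMachine_of_sum_le_one (len := fun j => j + 2)
    (out := fun _ => x) (by fun_prop) (.const x) hsum
  obtain ⟨σ, -, hσ⟩ := program 0
  exact Nat.sInf_mem (s := {k | ∃ e, ∃ σ : List Bool, PrefixFreeMachine e ∧
    x ∈ (Denumerable.ofNat Nat.Partrec.Code e).eval (Encodable.encode σ) ∧
    k = σ.length + 2 * e + 2}) ⟨_, e, σ, he, hσ, rfl⟩

/-- The programs on which machine `e` halts by stage `r`. -/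
def haltsBy (r e : ℕ) : Set (List Bool) :=
  {σ | Nat.Partrec.Code.evaln r (Denumerable.ofNat _ e) (Encodable.encode σ) ≠ none}

theorem haltsBy_mono {r s : ℕ} (h : r ≤ s) (e : ℕ) : haltsBy r e ⊆ haltsBy s e :=
  fun _ hσ => evaln_ne_none_mono h hσ

theorem haltsBy_subset_machineDom (r e : ℕ) : haltsBy r e ⊆ machineDom e := fun σ hσ => by
  obtain ⟨y, hy⟩ := Option.ne_none_iff_exists'.1 hσ
  exact Part.dom_iff_mem.2 ⟨y, Nat.Partrec.Code.evaln_sound hy⟩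

theorem prefixFreeSet_haltsBy_iff (r e : ℕ) : PrefixFreeSet (haltsBy r e) ↔
    ∀ i < r, ∀ j < r, ¬ (decodeD (List Bool) i ∈ haltsBy r e ∧ decodeD (List Bool) j ∈ haltsBy r e ∧
      decodeD (List Bool) i =
        (decodeD (List Bool) j).take (decodeD (List Bool) i).length ∧
      decodeD (List Bool) i ≠ decodeD (List Bool) j) := by
  refine ⟨fun h i _ j _ ⟨hi, hj, le, ne⟩ => ne (h _ hi _ hj (List.prefix_iff_eq_take.2 le)),
    fun h σ hσ τ hτ le => by_contra fun ne => ?_⟩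
  have lt_stage {ρ : List Bool} (hρ : ρ ∈ haltsBy r e) : Encodable.encode ρ < r := by
    obtain ⟨y, hy⟩ := Option.ne_none_iff_exists'.1 hρ
    exact Nat.Partrec.Code.evaln_bound hy
  have := h _ (lt_stage hσ) _ (lt_stage hτ)
  simp only [decodeD_encode] at this
  exact this ⟨hσ, hτ, List.prefix_iff_eq_take.1 le, ne⟩

theorem primrecPred_prefixFreeSet_haltsBy :
    PrimrecPred fun q : ℕ × ℕ => PrefixFreeSet (haltsBy q.1 q.2) := by
  simp only [prefixFreeSet_haltsBy_iff]
  simp only [haltsBy, Set.mem_ofPred_eq]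
  apply primrecPred_forall_lt <;> [apply primrecPred_forall_lt; skip] <;> fun_prop

/-- `x = (e, σ, n)`, where machine `e` outputs a string of length `n` on program `σ` by a stage at
which it has not yet violated prefix-freeness. -/
def IsLengthProgram (x : ℕ × List Bool × ℕ) : Prop :=
  ∃ r y, PrefixFreeSet (haltsBy r x.1) ∧ Nat.Partrec.Code.evaln r (Denumerable.ofNat _ x.1)
    (Encodable.encode x.2.1) = some y ∧ (decodeD (List Bool) y).length = x.2.2

theorem sigma01In_isLengthProgram : Sigma01In emptyOracle IsLengthProgram := by
  have := primrecPred_comp (f := fun q : ((ℕ × List Bool × ℕ) × ℕ) × ℕ => (q.1.2, q.1.1.1))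
    primrecPred_prefixFreeSet_haltsBy (by fun_prop)
  exact Sigma01In.exists_nat (Sigma01In.exists_nat (.of_primrecPred (by fun_prop)))

namespace IsLengthProgram

variable {x y : ℕ × List Bool × ℕ}

theorem eq_of_program_eq (hx : IsLengthProgram x) (hy : IsLengthProgram y) (he : x.1 = y.1)
    (hσ : x.2.1 = y.2.1) : x = y := by
  obtain ⟨r, m, -, hm, hxm⟩ := hx
  obtain ⟨s, n, -, hn, hyn⟩ := hy
  rw [← he, ← hσ] at hn
  obtain rfl := Part.mem_unique (Nat.Partrec.Code.evaln_sound hm) (Nat.Partrec.Code.evaln_sound hn)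
  exact Prod.ext he (Prod.ext hσ (hxm.symm.trans hyn))

theorem program_eq_of_prefix (hx : IsLengthProgram x) (hy : IsLengthProgram y) (he : x.1 = y.1)
    (h : x.2.1 <+: y.2.1) : x.2.1 = y.2.1 := by
  obtain ⟨r, m, hr, hm, -⟩ := hx
  obtain ⟨s, n, hs, hn, -⟩ := hy
  rw [← he] at hs hn
  have mem_r : x.2.1 ∈ haltsBy r x.1 := Option.ne_none_iff_exists'.2 ⟨m, hm⟩
  have mem_s : y.2.1 ∈ haltsBy s x.1 := Option.ne_none_iff_exists'.2 ⟨n, hn⟩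
  rcases le_total r s with le | le
  · exact hs _ (haltsBy_mono le _ mem_r) _ mem_s h
  · exact hr _ mem_r _ (haltsBy_mono le _ mem_s) h

end IsLengthProgram

theorem sum_isLengthProgram_le {F : Finset (ℕ × List Bool × ℕ)} (hF : ∀ x ∈ F, IsLengthProgram x) :
    ∑ x ∈ F, ((2 : ℝ) ^ (x.2.1.length + 2 * x.1 + 2))⁻¹ ≤ 2⁻¹ := by
  classical
  have perMachine (e : ℕ) : ∑ x ∈ F with x.1 = e, ((2 : ℝ) ^ x.2.1.length)⁻¹ ≤ 1 := by
    have inj : Set.InjOn (fun x : ℕ × List Bool × ℕ => x.2.1) (F.filter fun x => x.1 = e) := by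
      intro x hx y hy h
      obtain ⟨hxF, hxe⟩ := Finset.mem_filter.1 hx
      obtain ⟨hyF, hye⟩ := Finset.mem_filter.1 hy
      exact (hF x hxF).eq_of_program_eq (hF y hyF) (hxe.trans hye.symm) h
    refine (Finset.sum_image (f := fun σ => ((2 : ℝ) ^ σ.length)⁻¹) inj).symm.trans_le
      (PrefixFreeSet.sum_inv_two_pow_length_le_one fun σ hσ τ hτ h => ?_)
    obtain ⟨x, hx, rfl⟩ := Finset.mem_image.1 hσ
    obtain ⟨y, hy, rfl⟩ := Finset.mem_image.1 hτ
    obtain ⟨hxF, hxe⟩ := Finset.mem_filter.1 hx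
    obtain ⟨hyF, hye⟩ := Finset.mem_filter.1 hy
    exact (hF x hxF).program_eq_of_prefix (hF y hyF) (hxe.trans hye.symm) h
  calc ∑ x ∈ F, ((2 : ℝ) ^ (x.2.1.length + 2 * x.1 + 2))⁻¹
    _ ≤ ∑ x ∈ F, ((2 : ℝ) ^ (x.1 + 2))⁻¹ * (2 ^ x.2.1.length)⁻¹ := by
        refine Finset.sum_le_sum fun x _ => ?_
        rw [← mul_inv, ← pow_add]
        exact inv_anti₀ (by positivity) (pow_le_pow_right₀ one_le_two (by omega))
    _ = ∑ e ∈ F.image Prod.fst, ((2 : ℝ) ^ (e + 2))⁻¹ *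
          ∑ x ∈ F with x.1 = e, (2 ^ x.2.1.length)⁻¹ := by
        rw [← Finset.sum_fiberwise_of_maps_to fun x => Finset.mem_image_of_mem Prod.fst]
        refine Finset.sum_congr rfl fun e _ => ?_
        rw [Finset.mul_sum]
        exact Finset.sum_congr rfl fun x hx => by rw [(Finset.mem_filter.1 hx).2]
    _ ≤ ∑ e ∈ F.image Prod.fst, ((2 : ℝ) ^ (e + 2))⁻¹ :=
        Finset.sum_le_sum fun e _ => mul_le_of_le_one_right (by positivity) (perMachine e)
    _ ≤ 2⁻¹ := sum_inv_two_pow_add_two_le _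

/-- A primitive recursive list of requests `(len s, cost s)` of total weight at most `1`, among
which the length `n` is requested at cost `K(n)`. It replaces the values `2^(-K(n))`, which are
only approximable from below. -/
structure LengthRequests where
  len : ℕ → ℕ
  cost : ℕ → ℕ
  primrec_len : Primrec len
  primrec_cost : Primrec cost
  sum_le_one : ∀ F : Finset ℕ, ∑ s ∈ F, ((2 : ℝ) ^ cost s)⁻¹ ≤ 1
  exists_cost_eq : ∀ n, ∃ s, len s = n ∧ cost s = KofNat n

theorem exists_isLengthProgram_kofNat (n : ℕ) :
    ∃ e σ, IsLengthProgram (e, σ, n) ∧ KofNat n = σ.length + 2 * e + 2 := by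
  obtain ⟨e, σ, he, hσ, hk⟩ := exists_program_kcpx (Encodable.encode (List.replicate n true))
  obtain ⟨r, hr⟩ := Nat.Partrec.Code.evaln_complete.1 hσ
  have prefixFree : PrefixFreeSet (haltsBy r e) := fun σ hσ τ hτ =>
    he σ (haltsBy_subset_machineDom r e hσ) τ (haltsBy_subset_machineDom r e hτ)
  exact ⟨e, σ, ⟨r, _, prefixFree, hr, by simp⟩, hk⟩

theorem nonempty_lengthRequests : Nonempty LengthRequests := by
  classical
  obtain ⟨fresh, g, hfresh, hg, mapsTo, injOn, surjOn⟩ :=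
    sigma01In_isLengthProgram.exists_primrec_bijOn
  refine ⟨{
    len s := if fresh s then (g s).2.2 else 0
    cost s := if fresh s then (g s).2.1.length + 2 * (g s).1 + 2 else s + 2
    primrec_len := by have := Primrec.const (α := ℕ) 0; fun_prop
    primrec_cost := by fun_prop
    sum_le_one F := ?_
    exists_cost_eq n := ?_ }⟩
  · have inj : Set.InjOn g (F.filter fresh) := injOn.mono fun j hj => (Finset.mem_filter.1 hj).2
    refine sum_inv_two_pow_ite_le_one <| (Finset.sum_image (f := fun x : ℕ × List Bool × ℕ =>
      ((2 : ℝ) ^ (x.2.1.length + 2 * x.1 + 2))⁻¹) inj).symm.trans_le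
      (sum_isLengthProgram_le fun x hx => ?_)
    obtain ⟨j, hj, rfl⟩ := Finset.mem_image.1 hx
    exact mapsTo (Finset.mem_filter.1 hj).2
  · obtain ⟨e, σ, hx, hk⟩ := exists_isLengthProgram_kofNat n
    obtain ⟨s, hs, hgs⟩ := surjOn hx
    exact ⟨s, by simp [if_pos (show fresh s from hs), hgs, hk]⟩

/-! ### Coding numbers into a random set -/

theorem exists_getElem?_strPrefix (X : ℕ → Bool) (B : Finset ℕ) :
    ∃ t, ∀ p ∈ B, (strPrefix X t)[p]? = some (X p) :=
  ⟨B.sup id + 1, fun _ hp =>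
    getElem?_strPrefix X (Nat.lt_succ_of_le (Finset.le_sup (f := id) hp))⟩

theorem eq_of_getElem?_strPrefix {X : ℕ → Bool} {t p : ℕ} {v : Bool}
    (h : (strPrefix X t)[p]? = some v) : X p = v := by
  obtain ⟨hp, -⟩ := List.getElem?_eq_some_iff.1 h
  rw [length_strPrefix] at hp
  rw [getElem?_strPrefix X hp] at h
  exact Option.some_inj.1 h

namespace LengthRequests

attribute [fun_prop] primrec_len primrec_cost

variable (Q : LengthRequests)

/-- The locations in column `n` reserved for the pair `x` of a string and a request. There are
`b` more of them than the cost of the request. -/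
def codePositions (n b : ℕ) (x : List Bool × ℕ) : Finset ℕ :=
  (Finset.range (Q.cost x.2 + b)).image fun j => Nat.pair n (Nat.pair (Encodable.encode x) j)

/-- The class of sets which contain all locations reserved for `x`. -/
def codeEvent (n b : ℕ) (x : List Bool × ℕ) : Set (ℕ → Bool) := allTrueOn (Q.codePositions n b x)

/-- The `s`-th request, paired with the initial segment of `A` of the requested length. -/
def request (A : ℕ → Bool) (s : ℕ) : List Bool × ℕ := (strPrefix A (Q.len s), s)

/-- In the presence of `A`, the set `X` codes the number `s` in its column `n`. -/
def Codes (A : ℕ → Bool) (n b s : ℕ) (X : ℕ → Bool) : Prop :=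
  IsLeast {r | X ∈ Q.codeEvent n b (Q.request A r)} s

variable {Q} {A X : ℕ → Bool} {n b s : ℕ}

theorem mem_codeEvent_iff {x : List Bool × ℕ} : X ∈ Q.codeEvent n b x ↔
    ∀ j < Q.cost x.2 + b, X (Nat.pair n (Nat.pair (Encodable.encode x) j)) = true := by
  simp [codeEvent, codePositions, allTrueOn]

theorem measurableSet_codeEvent (x : List Bool × ℕ) : MeasurableSet (Q.codeEvent n b x) :=
  measurableSet_allTrueOn _

theorem measure_codeEvent (x : List Bool × ℕ) :
    μCantor.real (Q.codeEvent n b x) = (2 ^ Q.cost x.2)⁻¹ * (2 ^ b)⁻¹ := by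
  rw [codeEvent, measure_allTrueOn, codePositions, Finset.card_image_of_injective,
    Finset.card_range, pow_add, mul_inv]
  exact fun j j' h => by simpa using h

theorem indepSet_codeEvent {x y : List Bool × ℕ} (h : x ≠ y) :
    ProbabilityTheory.IndepSet (Q.codeEvent n b x) (Q.codeEvent n b y) μCantor := by
  refine indepSet_allTrueOn (Finset.disjoint_left.2 fun p hx hy => h ?_)
  obtain ⟨j, -, rfl⟩ := Finset.mem_image.1 hx
  obtain ⟨j', -, hj'⟩ := Finset.mem_image.1 hy
  simp only [Nat.pair_eq_pair, Encodable.encode_inj] at hj'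
  exact hj'.2.1.symm

theorem codes_iff : Q.Codes A n b s X ↔ X ∈ Q.codeEvent n b (Q.request A s) ∧
    ∀ r < s, X ∉ Q.codeEvent n b (Q.request A r) :=
  and_congr_right fun _ => forall_congr' fun _ => by rw [← not_imp_not, not_le]; rfl

theorem sigma01In_measure_inter_codeEvent_lt (Q : LengthRequests) (n b c : ℕ)
    (L : List (ℕ × ℕ × ℕ)) : Sigma01In emptyOracle fun x => μCantor.real
      (constraintClass L ∩ Q.codeEvent n b x) < (2 ^ (c + Q.cost x.2))⁻¹ := by
  obtain ⟨e, he⟩ := exists_ceOpen_eq (α := List Bool × ℕ) (p := fun x σ =>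
    ∃ j < Q.cost x.2 + b, σ[Nat.pair n (Nat.pair (Encodable.encode x) j)]? = some false)
    (.of_primrecPred (by apply primrecPred_exists_lt <;> fun_prop))
  have ceOpen_eq : ∀ x, ceOpen e (Encodable.encode x) = (Q.codeEvent n b x)ᶜ := fun x => by
    ext X
    rw [he, mem_openOf_iff, Set.mem_compl_iff, mem_codeEvent_iff]
    push Not
    constructor
    · rintro ⟨t, j, hj, h⟩
      exact ⟨j, hj, by rw [eq_of_getElem?_strPrefix h]; decide⟩
    · rintro ⟨j, hj, h⟩
      exact ⟨_, j, hj, by rw [getElem?_strPrefix X (Nat.lt_succ_self _), Bool.eq_false_iff.2 h]⟩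
  refine (sigma01In_not_large.comp (g := fun x : List Bool × ℕ =>
    ((e, Encodable.encode x, 0) :: L, c + Q.cost x.2)) (by fun_prop)).of_iff fun x => ?_
  rw [Large, constraintClass_cons_zero, ceOpen_eq, Set.sdiff_compl, not_le]

theorem sum_inv_two_pow_cost_le {L : List (ℕ × ℕ × ℕ)} {d : ℕ} (hL : Large L d)
    {F : Finset (List Bool × ℕ)} (small : ∀ x ∈ F, μCantor.real (constraintClass L ∩
      Q.codeEvent n b x) ≤ (2 ^ (d + b + 1 + Q.cost x.2))⁻¹) :
    ∑ x ∈ F, ((2 : ℝ) ^ Q.cost x.2)⁻¹ ≤ 2 ^ (d + b + 2) := by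
  have le_four := sum_measure_mul_measure_le_four (ν := μCantor) (F := F)
    (P := constraintClass L) measurableSet_codeEvent
    (fun x _ y _ hxy => indepSet_codeEvent (n := n) (b := b) hxy) fun x hx => calc
      μCantor.real (constraintClass L ∩ Q.codeEvent n b x)
      _ ≤ (2 ^ (d + b + 1 + Q.cost x.2))⁻¹ := small x hx
      _ = (2 ^ d)⁻¹ / 2 * μCantor.real (Q.codeEvent n b x) := by
          rw [measure_codeEvent, pow_add, pow_add, pow_add]
          field_simp
      _ ≤ _ := by gcongr; exact hL
  simp only [measure_codeEvent, ← Finset.sum_mul] at le_four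
  set S := ∑ x ∈ F, ((2 : ℝ) ^ Q.cost x.2)⁻¹ with hS
  have S_nonneg : 0 ≤ S := Finset.sum_nonneg fun x _ => by positivity
  calc S = S * (2 ^ b)⁻¹ * (2 ^ d)⁻¹ * 2 ^ (d + b) := by rw [pow_add]; field_simp
    _ ≤ S * (2 ^ b)⁻¹ * μCantor.real (constraintClass L) * 2 ^ (d + b) := by gcongr; exact hL
    _ ≤ 4 * 2 ^ (d + b) := by gcongr
    _ = 2 ^ (d + b + 2) := by ring

theorem exists_le_measure_inter_codeEvent (hA : ¬ KTrivial A) {L : List (ℕ × ℕ × ℕ)} {d : ℕ}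
    (hL : Large L d) (n b t : ℕ) : ∃ s ≥ t, ((2 : ℝ) ^ (d + b + 1 + Q.cost s))⁻¹ ≤
      μCantor.real (constraintClass L ∩ Q.codeEvent n b (Q.request A s)) := by
  by_contra! small
  obtain ⟨c, hc⟩ := exists_kcpx_le_of_sum_le
    (sigma01In_measure_inter_codeEvent_lt Q n b (d + b + 1) L) (len := fun x => Q.cost x.2)
    (out := fun x => Encodable.encode x.1) (by fun_prop) (by fun_prop) (q := d + b + 2)
    (fun F hF => sum_inv_two_pow_cost_le hL fun x hx => (hF x hx).le)
  refine hA ⟨c + (Finset.range t).sup fun s => Kcpx (Encodable.encode (strPrefix A (Q.len s))),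
    fun m => ?_⟩
  obtain ⟨s, rfl, hs⟩ := Q.exists_cost_eq m
  rcases le_or_gt t s with hts | hst
  · have := hc (Q.request A s) (small s hts)
    simp only [request, hs] at this
    lia
  · have := Finset.le_sup (f := fun s => Kcpx (Encodable.encode (strPrefix A (Q.len s))))
      (Finset.mem_range.2 hst)
    lia

theorem sum_measure_inter_codeEvent_le (Q : LengthRequests) (A : ℕ → Bool) (n b s : ℕ) :
    ∑ r ∈ Finset.range s, μCantor.real
      (Q.codeEvent n b (Q.request A s) ∩ Q.codeEvent n b (Q.request A r)) ≤
      (2 ^ (b + b + Q.cost s))⁻¹ := by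
  have independent : ∀ r ∈ Finset.range s, μCantor.real
      (Q.codeEvent n b (Q.request A s) ∩ Q.codeEvent n b (Q.request A r)) =
      (2 ^ Q.cost r)⁻¹ * (2 ^ (b + b + Q.cost s))⁻¹ := fun r hr => by
    have ne : Q.request A s ≠ Q.request A r := fun h =>
      (Finset.mem_range.1 hr).ne (congrArg Prod.snd h).symm
    rw [measureReal_def, (indepSet_codeEvent ne).measure_inter_eq_mul, ENNReal.toReal_mul,
      ← measureReal_def, ← measureReal_def, measure_codeEvent, measure_codeEvent, pow_add, pow_add,
      request, request]
    ring
  rw [Finset.sum_congr rfl independent, ← Finset.sum_mul]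
  exact mul_le_of_le_one_left (by positivity) (Q.sum_le_one _)

theorem exists_lt_measure_inter_codes (Q : LengthRequests) (hA : ¬ KTrivial A)
    {L : List (ℕ × ℕ × ℕ)} {d : ℕ} (hL : Large L d) (n t : ℕ) (hb : d + 3 ≤ b) :
    ∃ s ≥ t, ((2 : ℝ) ^ (d + b + 2 + Q.cost s))⁻¹ <
      μCantor.real (constraintClass L ∩ {X | Q.Codes A n b s X}) := by
  obtain ⟨s, hst, hs⟩ := exists_le_measure_inter_codeEvent (Q := Q) hA hL n b t
  refine ⟨s, hst, ?_⟩
  have cover : constraintClass L ∩ Q.codeEvent n b (Q.request A s) ⊆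
      (constraintClass L ∩ {X | Q.Codes A n b s X}) ∪ ⋃ r ∈ Finset.range s,
        Q.codeEvent n b (Q.request A s) ∩ Q.codeEvent n b (Q.request A r) := by
    rintro X ⟨hXL, hXs⟩
    by_cases hX : Q.Codes A n b s X
    · exact Or.inl ⟨hXL, hX⟩
    · simp only [codes_iff, hXs, true_and, not_forall, not_not] at hX
      obtain ⟨r, hr, hXr⟩ := hX
      exact Or.inr (Set.mem_biUnion (Finset.mem_coe.2 (Finset.mem_range.2 hr)) ⟨hXs, hXr⟩)
  have le_add := (measureReal_mono (μ := μCantor) cover).trans <|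
    (measureReal_union_le _ _).trans <| add_le_add_right (measureReal_biUnion_finset_le _ _) _
  have siblings : ((2 : ℝ) ^ (b + b + Q.cost s))⁻¹ ≤ (2 ^ (d + b + 3 + Q.cost s))⁻¹ := by
    exact inv_anti₀ (by positivity) (pow_le_pow_right₀ one_le_two (by lia))
  have h₁ := inv_two_pow_succ_add (d + b + 1 + Q.cost s)
  have h₂ := inv_two_pow_succ_add (d + b + 2 + Q.cost s)
  have pos : (0 : ℝ) < (2 ^ (d + b + 3 + Q.cost s))⁻¹ := by positivity
  rw [show d + b + 1 + Q.cost s + 1 = d + b + 2 + Q.cost s by ring] at h₁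
  rw [show d + b + 2 + Q.cost s + 1 = d + b + 3 + Q.cost s by ring] at h₂
  linarith [sum_measure_inter_codeEvent_le Q A n b s]

theorem codes_iff_exists_strPrefix : Q.Codes A n b s X ↔ ∃ t,
    (∀ j < Q.cost s + b, (strPrefix X t)[Nat.pair n
      (Nat.pair (Encodable.encode (Q.request A s)) j)]? = some true) ∧
    ∀ r < s, ∃ j < Q.cost r + b, (strPrefix X t)[Nat.pair n
      (Nat.pair (Encodable.encode (Q.request A r)) j)]? = some false := by
  simp only [codes_iff, mem_codeEvent_iff]
  push Not
  constructor
  · rintro ⟨hs, hr⟩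
    obtain ⟨t, ht⟩ := exists_getElem?_strPrefix X
      ((Finset.range (s + 1)).biUnion fun r => Q.codePositions n b (Q.request A r))
    have get : ∀ r ≤ s, ∀ j < Q.cost r + b, (strPrefix X t)[Nat.pair n
        (Nat.pair (Encodable.encode (Q.request A r)) j)]? =
        some (X (Nat.pair n (Nat.pair (Encodable.encode (Q.request A r)) j))) := fun r hrs j hj =>
      ht _ (Finset.mem_biUnion.2 ⟨r, Finset.mem_range_succ_iff.2 hrs,
        Finset.mem_image_of_mem _ (Finset.mem_range.2 hj)⟩)
    refine ⟨t, fun j hj => by rw [get s le_rfl j hj, hs j hj], fun r hrs => ?_⟩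
    obtain ⟨j, hj, hX⟩ := hr r hrs
    exact ⟨j, hj, by rw [get r hrs.le j hj, Bool.eq_false_iff.2 hX]⟩
  · rintro ⟨t, hs, hr⟩
    refine ⟨fun j hj => eq_of_getElem?_strPrefix (hs j hj), fun r hrs => ?_⟩
    obtain ⟨j, hj, h⟩ := hr r hrs
    exact ⟨j, hj, Bool.eq_false_iff.1 (eq_of_getElem?_strPrefix h)⟩

theorem exists_ceOpen_eq_codes (Q : LengthRequests) : ∃ e, ∀ (A : ℕ → Bool) (n b l s : ℕ),
    (∀ r ≤ s, Q.len r ≤ l) →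
    ceOpen e (Encodable.encode (n, b, strPrefix A l, s)) = {X | Q.Codes A n b s X} := by
  let position (q : ℕ × ℕ × List Bool × ℕ) (r j : ℕ) : ℕ :=
    Nat.pair q.1 (Nat.pair (Encodable.encode (q.2.2.1.take (Q.len r), r)) j)
  obtain ⟨e, he⟩ := exists_ceOpen_eq (p := fun (q : ℕ × ℕ × List Bool × ℕ) σ =>
    (∀ j < Q.cost q.2.2.2 + q.2.1, σ[position q q.2.2.2 j]? = some true) ∧
      ∀ r < q.2.2.2, ∃ j < Q.cost r + q.2.1, σ[position q r j]? = some false) <| by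
    refine .of_primrecPred (primrecPred_and ?_ ?_)
    · apply primrecPred_forall_lt <;> fun_prop
    · apply primrecPred_forall_lt <;> [apply primrecPred_exists_lt; skip] <;> fun_prop
  refine ⟨e, fun A n b l s hl => Set.ext fun X => ?_⟩
  have position_eq : ∀ r ≤ s, ∀ j, position (n, b, strPrefix A l, s) r j =
      Nat.pair n (Nat.pair (Encodable.encode (Q.request A r)) j) := fun r hr j => by
    simp only [position, request, take_strPrefix _ (hl r hr)]
  rw [he, mem_openOf_iff, Set.mem_ofPred_eq, codes_iff_exists_strPrefix]
  refine exists_congr fun t => and_congr ?_ (forall₂_congr fun r hr => ?_)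
  · simp only [position_eq s le_rfl]
  · simp only [position_eq r hr.le]

/-- A uniform index for the classes of sequences which code a given number by means of `Q`. -/
noncomputable def codesIndex (Q : LengthRequests) : ℕ := Q.exists_ceOpen_eq_codes.choose

theorem ceOpen_codesIndex {l : ℕ} (hl : ∀ r ≤ s, Q.len r ≤ l) :
    ceOpen Q.codesIndex (Encodable.encode (n, b, strPrefix A l, s)) = {X | Q.Codes A n b s X} :=
  Q.exists_ceOpen_eq_codes.choose_spec A n b l s hl

theorem _root_.Large.exists_cons_codes {L : List (ℕ × ℕ × ℕ)} {d : ℕ} (hL : Large L d)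
    (Q : LengthRequests) (hA : ¬ KTrivial A) (n t : ℕ) (hb : d + 3 ≤ b) :
    ∃ s ≥ t, ∃ l, (∀ r ≤ s, Q.len r ≤ l) ∧ ∃ k ≠ 0,
      Large ((Q.codesIndex, Encodable.encode (n, b, strPrefix A l, s), k) :: L)
        (d + b + 2 + Q.cost s) := by
  obtain ⟨s, hst, hs⟩ := exists_lt_measure_inter_codes Q hA hL n t hb
  have hl : ∀ r ≤ s, Q.len r ≤ (Finset.range (s + 1)).sup Q.len := fun r hr =>
    Finset.le_sup (Finset.mem_range_succ_iff.2 hr)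
  rw [← ceOpen_codesIndex hl] at hs
  exact ⟨s, hst, _, hl, exists_large_cons_of_lt_measure_inter hs⟩

theorem delta01In_codes (Q : LengthRequests) (A X : ℕ → Bool) :
    Delta01In (joinSet A X) fun q : ℕ × ℕ × ℕ => Q.Codes A q.1 q.2.1 q.2.2 X := by
  have position : Delta01In (joinSet A X) fun q : ((ℕ × ℕ × ℕ) × List Bool) × ℕ =>
      X (Nat.pair q.1.1.1 (Nat.pair (Encodable.encode (q.1.2, q.1.1.2.2)) q.2)) = true :=
    delta01In_joinSet_right.comp (g := fun q : ((ℕ × ℕ × ℕ) × List Bool) × ℕ =>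
      Nat.pair q.1.1.1 (Nat.pair (Encodable.encode (q.1.2, q.1.1.2.2)) q.2)) (by fun_prop)
  have event : Delta01In (joinSet A X) fun q : ℕ × ℕ × ℕ =>
      X ∈ Q.codeEvent q.1 q.2.1 (Q.request A q.2.2) :=
    (Delta01In.comp_strPrefix (p := fun (q : ℕ × ℕ × ℕ) σ => ∀ j < Q.cost q.2.2 + q.2.1,
      X (Nat.pair q.1 (Nat.pair (Encodable.encode (σ, q.2.2)) j)) = true)
      delta01In_joinSet_left (g := fun q => Q.len q.2.2)
      (position.forall_lt (g := fun q : (ℕ × ℕ × ℕ) × List Bool => Q.cost q.1.2.2 + q.1.2.1)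
        (by fun_prop))
      (by fun_prop)).of_iff fun q => (mem_codeEvent_iff (x := Q.request A q.2.2)).symm
  exact (event.and ((event.not.comp (g := fun q : (ℕ × ℕ × ℕ) × ℕ => (q.1.1, q.1.2.1, q.2))
    (by fun_prop)).forall_lt (g := fun q => q.2.2) (by fun_prop))).of_iff fun q => codes_iff.symm

theorem sigma01In_graph_of_codes {A R : ℕ → Bool} {b s : ℕ → ℕ} {g : ℕ × ℕ → ℕ} (hg : Primrec g)
    (codes : ∀ n, Q.Codes A n (b n) (s n) R) (rec_eq : ∀ n, b (n + 1) = g (b n, s n)) :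
    Sigma01In (joinSet A R) fun q : ℕ × ℕ => s q.1 = q.2 := by
  have graph_b : Sigma01In (joinSet A R) fun q : ℕ × ℕ => b q.1 = q.2 := by
    refine .graph_of_rec (Q := fun q => ∃ r, Q.Codes A q.1 q.2.1 r R ∧ q.2.2 = g (q.2.1, r))
      (.exists_nat (((delta01In_codes Q A R).1.comp (g := fun q : (ℕ × ℕ × ℕ) × ℕ =>
        (q.1.1, q.1.2.1, q.2)) (by fun_prop)).and (.of_primrecPred (by fun_prop)))) fun n y => ?_
    rw [rec_eq]
    exact ⟨fun ⟨r, hr, hy⟩ => hy.trans (congrArg (fun r => g (b n, r)) (hr.unique (codes n))),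
      fun hy => ⟨s n, codes n, hy⟩⟩
  have graph_s : Sigma01In (joinSet A R) fun q : ℕ × ℕ => ∃ y, b q.1 = y ∧ Q.Codes A q.1 y q.2 R :=
    .exists_nat ((graph_b.comp (g := fun q : (ℕ × ℕ) × ℕ => (q.1.1, q.2)) (by fun_prop)).and
      ((delta01In_codes Q A R).1.comp (g := fun q : (ℕ × ℕ) × ℕ => (q.1.1, q.2, q.1.2))
        (by fun_prop)))
  refine graph_s.of_iff fun q => ⟨fun ⟨y, hy, hq⟩ => ?_, fun hq => ⟨_, rfl, hq ▸ codes _⟩⟩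
  exact (codes q.1).unique (hy ▸ hq)

end LengthRequests

/-! ### The stages of the construction -/

theorem exists_ceOpen_eq_jump : ∃ u, ∀ n, ceOpen u n = {X | jump X n = true} := by
  obtain ⟨u, hu⟩ := exists_ceOpen_eq (p := fun n σ =>
    ∃ m, WEnum n (Nat.pair (Encodable.encode σ) (Nat.pair n m)))
    (.exists_nat (sigma01In_wEnum.comp (g := fun q : (ℕ × List Bool) × ℕ =>
      (q.1.1, Nat.pair (Encodable.encode q.1.2) (Nat.pair q.1.1 q.2))) (by fun_prop)))
  refine ⟨u, fun n => (hu n).trans (Set.ext fun X => ?_)⟩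
  rw [mem_openOf_iff, Set.mem_ofPred_eq, jump_eq_true_iff]
  exact exists_comm

theorem exists_ceOpen_eq_testLevel :
    ∃ v, ∀ e n, ceOpen v (Nat.pair e n) = testLevel e emptyOracle n := by
  obtain ⟨v, hv⟩ := exists_ceOpen_eq (p := fun (q : ℕ × ℕ) σ =>
    ∃ m, OracleComputes q.1 emptyOracle (Nat.pair q.2 (Encodable.encode σ)) m)
    (.exists_nat (sigma01In_oracleComputes.comp (g := fun q : ((ℕ × ℕ) × List Bool) × ℕ =>
      (q.1.1.1, Nat.pair q.1.1.2 (Encodable.encode q.1.2), q.2)) (by fun_prop)))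
  exact ⟨v, fun e n => hv (e, n)⟩

theorem mem_ceOpen_pair_iff (e m i : ℕ) (X : ℕ → Bool) :
    X ∈ ceOpen e (Nat.pair m i) ↔ OracleComputes e X m i :=
  (mem_ceOpen_iff e _ X).trans (oracleComputes_iff e X m i).symm

/-- A uniform index for the classes of sequences whose jump contains a given number. -/
noncomputable def jumpIndex : ℕ := exists_ceOpen_eq_jump.choose

/-- A uniform index for the levels of all effective sequences of open classes. -/
noncomputable def testIndex : ℕ := exists_ceOpen_eq_testLevel.choose

/-- A forcing condition: a list of constraints on the sequence under construction, together with a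
number `d` such that the class of the list should have measure at least `2⁻ᵈ`. -/
abbrev Condition : Type := List (ℕ × ℕ × ℕ) × ℕ

/-- The condition `T` adds the constraint `c` to `S`, and its class has measure at least `2⁻ᵈ`. -/
def ExtendsBy (c : ℕ × ℕ × ℕ) (d : ℕ) (S T : Condition) : Prop :=
  T = (c :: S.1, d) ∧ Large T.1 T.2

/-- `T` decides membership in `ceOpen e a`, choosing to stay outside if it can. -/
def DecideStep (e a : ℕ) (S T : Condition) : Prop :=
  ∃ k, ExtendsBy (e, a, k) (S.2 + 1) S T ∧ (k ≠ 0 → ¬ Large ((e, a, 0) :: S.1) (S.2 + 1))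

/-- `T` makes the functional `e` disagree with `D` at some `m`: it forces some wrong value `i`, or
it forbids the correct one. -/
def DisagreeStep (D : ℕ → Bool) (e : ℕ) (S T : Condition) : Prop :=
  ∃ m i k, (k = 0 ↔ i = natOfBool (D m)) ∧ ExtendsBy (e, Nat.pair m i, k) (S.2 + 1) S T

/-- `T` codes into column `n` a number `s` which bounds a witness of `h n`, if `n ∈ ∅′`. -/
def CodeStep (A : ℕ → Bool) (Q : LengthRequests) (h : ℕ × ℕ → Prop) (n : ℕ) (S T : Condition) :
    Prop :=
  ∃ s l k, (∀ r < s + 1, Q.len r ≤ l) ∧ k ≠ 0 ∧ (zeroJump n = true → ∃ x < s, h (n, x)) ∧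
    ExtendsBy (Q.codesIndex, Encodable.encode (n, S.2 + 3, strPrefix A l, s), k)
      (2 * S.2 + 5 + Q.cost s) S T

/-- Stage `n` of the construction decides the jump, makes the sequence pass the `n`-th test, avoids
computing `D` by the `n`-th functional, and codes whether `n ∈ ∅′`. The level of the test is chosen
so small that its class can be avoided. -/
def Stage (A D : ℕ → Bool) (Q : LengthRequests) (h : ℕ × ℕ → Prop) (n : ℕ) (S T : Condition) :
    Prop :=
  ∃ S₁ S₂ S₃, DecideStep jumpIndex n S S₁ ∧
    DecideStep testIndex (Nat.pair n (S₁.2 + 1)) S₁ S₂ ∧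
    DisagreeStep D n S₂ S₃ ∧ CodeStep A Q h n S₃ T

section Complexity

variable {α : Type*} [Primcodable α] {S T : α → Condition} {A D : ℕ → Bool} {Q : LengthRequests}
  {h : ℕ × ℕ → Prop}

theorem sigma01In_extendsBy {c : α → ℕ × ℕ × ℕ} {d : α → ℕ} (hc : Primrec c) (hd : Primrec d)
    (hS : Primrec S) (hT : Primrec T) :
    Sigma01In zeroJump fun x => ExtendsBy (c x) (d x) (S x) (T x) :=
  .and (.of_primrecPred (by fun_prop)) (delta01In_large (by fun_prop) (by fun_prop)).1

theorem sigma01In_decideStep {e a : α → ℕ} (he : Primrec e) (ha : Primrec a) (hS : Primrec S)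
    (hT : Primrec T) : Sigma01In zeroJump fun x => DecideStep (e x) (a x) (S x) (T x) := by
  simp only [DecideStep, ← or_iff_not_imp_left, ne_eq]
  refine .exists_nat (.and (sigma01In_extendsBy ?_ ?_ ?_ ?_) (.or (.of_primrecPred ?_)
    (delta01In_large ?_ ?_).2)) <;> fun_prop

theorem Delta01In.eq_natOfBool {X : ℕ → Bool} (hD : Delta01In X fun n => D n = true)
    {i m : α → ℕ} (hi : Primrec i) (hm : Primrec m) :
    Delta01In X fun x => i x = natOfBool (D (m x)) := by
  have h (k : ℕ) : Delta01In X fun x => i x = k := .of_primrecPred (by fun_prop)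
  refine (((hD.comp hm).and (h 1)).or ((hD.comp hm).not.and (h 0))).of_iff fun x => ?_
  cases hx : D (m x) <;> simp [natOfBool]

theorem sigma01In_disagreeStep (hD : Delta01In zeroJump fun n => D n = true) {e : α → ℕ}
    (he : Primrec e) (hS : Primrec S) (hT : Primrec T) :
    Sigma01In zeroJump fun x => DisagreeStep D (e x) (S x) (T x) := by
  refine .exists_nat (.exists_nat (.exists_nat (.and
    (Delta01In.iff (.of_primrecPred ?_) (hD.eq_natOfBool ?_ ?_)).1
    (sigma01In_extendsBy ?_ ?_ ?_ ?_)))) <;> fun_prop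

theorem sigma01In_codeStep (hA : Delta01In zeroJump fun n => A n = true) (hh : PrimrecPred h)
    {n : α → ℕ} (hn : Primrec n) (hS : Primrec S) (hT : Primrec T) :
    Sigma01In zeroJump fun x => CodeStep A Q h (n x) (S x) (T x) := by
  refine .exists_nat (.exists_nat (.exists_nat (.and (.of_primrecPred ?_) (.and
    (.of_primrecPred ?_) (.and ?_ ?_)))))
  · apply primrecPred_forall_lt <;> fun_prop
  · fun_prop
  · simp only [imp_iff_not_or]
    refine .or (Delta01In.oracle.2.comp ?_) (.of_primrecPred ?_)
    · fun_prop
    · apply primrecPred_exists_lt <;> fun_prop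
  · refine .comp_strPrefix (p := fun (q : ((α × ℕ) × ℕ) × ℕ) σ => ExtendsBy (Q.codesIndex,
      Encodable.encode (n q.1.1.1, (S q.1.1.1).2 + 3, σ, q.1.1.2), q.2)
      (2 * (S q.1.1.1).2 + 5 + Q.cost q.1.1.2) (S q.1.1.1) (T q.1.1.1)) hA
      (sigma01In_extendsBy ?_ ?_ ?_ ?_) ?_ <;> fun_prop

theorem sigma01In_stage (hA : Delta01In zeroJump fun n => A n = true)
    (hD : Delta01In zeroJump fun n => D n = true) (hh : PrimrecPred h) :
    Sigma01In zeroJump fun q : (ℕ × Condition) × Condition =>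
      Stage A D Q h q.1.1 q.1.2 q.2 := by
  refine .exists_of_inhabited (.exists_of_inhabited (.exists_of_inhabited (.and
    (sigma01In_decideStep ?_ ?_ ?_ ?_) (.and (sigma01In_decideStep ?_ ?_ ?_ ?_) (.and
    (sigma01In_disagreeStep hD ?_ ?_ ?_) (sigma01In_codeStep hA hh ?_ ?_ ?_)))))) <;> fun_prop

end Complexity

section Verification

variable {e a m n : ℕ} {c : ℕ × ℕ × ℕ} {d : ℕ} {S T : Condition} {A D R : ℕ → Bool}
  {Q : LengthRequests} {h : ℕ × ℕ → Prop}

theorem ceOpen_jumpIndex (n : ℕ) : ceOpen jumpIndex n = {X | jump X n = true} :=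
  exists_ceOpen_eq_jump.choose_spec n

theorem ceOpen_testIndex (e n : ℕ) :
    ceOpen testIndex (Nat.pair e n) = testLevel e emptyOracle n :=
  exists_ceOpen_eq_testLevel.choose_spec e n

theorem exists_decideStep (hS : Large S.1 S.2) (e a : ℕ) : ∃ T, DecideStep e a S T := by
  obtain ⟨k, large, avoid⟩ := hS.exists_cons e a
  exact ⟨_, k, ⟨rfl, large⟩, avoid⟩

theorem exists_disagreeStep (hD : ¬ ComputableSet D) (hS : Large S.1 S.2) (e : ℕ) :
    ∃ T, DisagreeStep D e S T := by
  obtain ⟨m, i, k, hk, large⟩ := hS.exists_cons_disagree hD e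
  exact ⟨_, m, i, k, hk, rfl, large⟩

theorem exists_codeStep (hA : ¬ KTrivial A) (hh : ∀ n, zeroJump n = true → ∃ x, h (n, x))
    (hS : Large S.1 S.2) (n : ℕ) : ∃ T, CodeStep A Q h n S T := by
  obtain ⟨t, ht⟩ : ∃ t, zeroJump n = true → ∃ x < t, h (n, x) := by
    by_cases hn : zeroJump n = true
    · obtain ⟨x, hx⟩ := hh n hn
      exact ⟨x + 1, fun _ => ⟨x, x.lt_succ_self, hx⟩⟩
    · exact ⟨0, fun h => absurd h hn⟩
  obtain ⟨s, hts, l, hl, k, hk, large⟩ := hS.exists_cons_codes Q hA n t le_rfl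
  refine ⟨_, s, l, k, fun r hr => hl r (Nat.lt_succ_iff.1 hr), hk, fun hn => ?_, rfl, ?_⟩
  · exact (ht hn).imp fun x hx => ⟨hx.1.trans_le hts, hx.2⟩
  · convert large using 1
    ring

theorem ExtendsBy.mem_ceOpen_iff {k : ℕ} (hT : ExtendsBy (e, a, k) d S T)
    (hR : R ∈ constraintClass T.1) : R ∈ ceOpen e a ↔ k ≠ 0 := by
  refine mem_ceOpen_iff_of_mem_constraintClass hR ?_
  rw [hT.1]
  exact List.mem_cons_self

theorem ExtendsBy.subset (hT : ExtendsBy c d S T) : S.1 ⊆ T.1 := by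
  rw [hT.1]
  exact List.subset_cons_self _ _

namespace DecideStep

theorem subset (hT : DecideStep e a S T) : S.1 ⊆ T.1 := by
  obtain ⟨_, hT, -⟩ := hT
  exact hT.subset

theorem large (hT : DecideStep e a S T) : Large T.1 T.2 := by
  obtain ⟨_, hT, -⟩ := hT
  exact hT.2

theorem mem_ceOpen_iff (hT : DecideStep e a S T) {L : List (ℕ × ℕ × ℕ)} (hL : T.1 ⊆ L)
    (hR : R ∈ constraintClass L) : R ∈ ceOpen e a ↔ (e, a, 0) ∉ L := by
  obtain ⟨k, hT, -⟩ := hT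
  refine ⟨fun hmem h0 => ?_, fun h0 => (hT.mem_ceOpen_iff (constraintClass_anti hL hR)).2 ?_⟩
  · exact (mem_ceOpen_iff_of_mem_constraintClass hR h0).1 hmem rfl
  · rintro rfl
    exact h0 (hL (hT.1 ▸ List.mem_cons_self))

theorem notMem_ceOpen (hT : DecideStep e a S T) (hR : R ∈ constraintClass T.1)
    (hS : Large S.1 S.2) (le : μCantor.real (ceOpen e a) ≤ (2 ^ (S.2 + 1))⁻¹) :
    R ∉ ceOpen e a := by
  obtain ⟨k, hT, avoid⟩ := hT
  rw [hT.mem_ceOpen_iff hR]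
  exact fun hk => avoid hk (hS.cons_zero_of_measure_le le)

end DecideStep

namespace DisagreeStep

theorem subset (hT : DisagreeStep D e S T) : S.1 ⊆ T.1 := by
  obtain ⟨_, _, _, -, hT⟩ := hT
  exact hT.subset

theorem large (hT : DisagreeStep D e S T) : Large T.1 T.2 := by
  obtain ⟨_, _, _, -, hT⟩ := hT
  exact hT.2

theorem exists_not_oracleComputes_iff (hT : DisagreeStep D e S T) (hR : R ∈ constraintClass T.1) :
    ∃ m i, ¬ (OracleComputes e R m i ↔ i = natOfBool (D m)) := by
  obtain ⟨m, i, k, hk, hT⟩ := hT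
  refine ⟨m, i, ?_⟩
  rw [← mem_ceOpen_pair_iff, hT.mem_ceOpen_iff hR, ← hk]
  exact not_iff_self

end DisagreeStep

namespace CodeStep

theorem subset (hT : CodeStep A Q h n S T) : S.1 ⊆ T.1 := by
  obtain ⟨_, _, _, -, -, -, hT⟩ := hT
  exact hT.subset

theorem large (hT : CodeStep A Q h n S T) : Large T.1 T.2 := by
  obtain ⟨_, _, _, -, -, -, hT⟩ := hT
  exact hT.2

theorem exists_codes (hT : CodeStep A Q h n S T) (hR : R ∈ constraintClass T.1) :
    ∃ s, Q.Codes A n (S.2 + 3) s R ∧ T.2 = 2 * S.2 + 5 + Q.cost s ∧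
      (zeroJump n = true → ∃ x < s, h (n, x)) := by
  obtain ⟨s, l, k, hl, hk, halts, hT⟩ := hT
  have mem := (hT.mem_ceOpen_iff hR).2 hk
  rw [LengthRequests.ceOpen_codesIndex fun r hr => hl r (Nat.lt_succ_of_le hr)] at mem
  exact ⟨s, mem, by rw [hT.1], halts⟩

end CodeStep

theorem exists_stage (hA : ¬ KTrivial A) (hD : ¬ ComputableSet D)
    (hh : ∀ n, zeroJump n = true → ∃ x, h (n, x)) (n : ℕ) (hS : Large S.1 S.2) :
    ∃ T, Stage A D Q h n S T := by
  obtain ⟨S₁, h₁⟩ := exists_decideStep hS jumpIndex n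
  obtain ⟨S₂, h₂⟩ := exists_decideStep h₁.large testIndex (Nat.pair n (S₁.2 + 1))
  obtain ⟨S₃, h₃⟩ := exists_disagreeStep hD h₂.large n
  obtain ⟨T, h₄⟩ := exists_codeStep (Q := Q) hA hh h₃.large n
  exact ⟨T, S₁, S₂, S₃, h₁, h₂, h₃, h₄⟩

namespace Stage

theorem large (hT : Stage A D Q h n S T) : Large T.1 T.2 := by
  obtain ⟨_, _, _, -, -, -, h₄⟩ := hT
  exact h₄.large

theorem subset (hT : Stage A D Q h n S T) : S.1 ⊆ T.1 := by
  obtain ⟨_, _, _, h₁, h₂, h₃, h₄⟩ := hT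
  exact fun _ hc => h₄.subset (h₃.subset (h₂.subset (h₁.subset hc)))

theorem jump_eq_true_iff (hT : Stage A D Q h n S T) (hR : R ∈ constraintClass T.1) :
    jump R n = true ↔ (jumpIndex, n, 0) ∉ T.1 := by
  obtain ⟨_, _, _, h₁, h₂, h₃, h₄⟩ := hT
  have := h₁.mem_ceOpen_iff (fun _ hc => h₄.subset (h₃.subset (h₂.subset hc))) hR
  rwa [ceOpen_jumpIndex] at this

theorem exists_notMem_testLevel (hT : Stage A D Q h e S T) (hR : R ∈ constraintClass T.1)
    (le : ∀ m, μCantor (testLevel e emptyOracle m) ≤ 2⁻¹ ^ m) :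
    ∃ m, R ∉ testLevel e emptyOracle m := by
  obtain ⟨S₁, _, _, h₁, h₂, h₃, h₄⟩ := hT
  have le' : μCantor.real (ceOpen testIndex (Nat.pair e (S₁.2 + 1))) ≤ (2 ^ (S₁.2 + 1))⁻¹ := by
    rw [ceOpen_testIndex]
    exact ENNReal.toReal_le_of_le_ofReal (by positivity) <| (le _).trans_eq <| by
      rw [ENNReal.ofReal_inv_of_pos (by positivity), ENNReal.ofReal_pow (by norm_num),
        ENNReal.inv_pow, ENNReal.ofReal_ofNat]
  refine ⟨S₁.2 + 1, ?_⟩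
  rw [← ceOpen_testIndex]
  exact h₂.notMem_ceOpen (constraintClass_anti (fun _ hc => h₄.subset (h₃.subset hc)) hR)
    h₁.large le'

theorem exists_not_oracleComputes_iff (hT : Stage A D Q h e S T) (hR : R ∈ constraintClass T.1) :
    ∃ m i, ¬ (OracleComputes e R m i ↔ i = natOfBool (D m)) := by
  obtain ⟨_, _, _, -, -, h₃, h₄⟩ := hT
  exact h₃.exists_not_oracleComputes_iff (constraintClass_anti h₄.subset hR)

theorem exists_codes (hT : Stage A D Q h n S T) (hR : R ∈ constraintClass T.1) :
    ∃ s, Q.Codes A n (S.2 + 6) s R ∧ T.2 = 2 * S.2 + 11 + Q.cost s ∧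
      (zeroJump n = true → ∃ x < s, h (n, x)) := by
  obtain ⟨_, _, _, ⟨_, ⟨rfl, -⟩, -⟩, ⟨_, ⟨rfl, -⟩, -⟩, ⟨_, _, _, -, rfl, -⟩, h₄⟩ := hT
  obtain ⟨s, codes, eq, halts⟩ := h₄.exists_codes hR
  exact ⟨s, codes, eq.trans (by ring), halts⟩

end Stage

end Verification

/-! ### The limit of the construction -/

/-- `c` is a run of the construction which is effective in `∅′`, and `R` is its limit: it meets all
constraints of the run. -/
structure IsRun (A D : ℕ → Bool) (Q : LengthRequests) (h : ℕ × ℕ → Prop) (c : ℕ → Condition)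
    (R : ℕ → Bool) : Prop where
  stage : ∀ n, Stage A D Q h n (c n) (c (n + 1))
  graph : Sigma01In zeroJump fun q : ℕ × Condition => c q.1 = q.2
  mem : ∀ n, R ∈ constraintClass (c n).1

theorem exists_forall_mem_constraintClass {c : ℕ → Condition}
    (large : ∀ n, Large (c n).1 (c n).2) (subset : ∀ n, (c n).1 ⊆ (c (n + 1)).1) :
    ∃ R, ∀ n, R ∈ constraintClass (c n).1 := by
  obtain ⟨R, hR⟩ := IsCompact.nonempty_iInter_of_sequence_nonempty_isCompact_isClosed
    (fun n => constraintClass (c n).1) (fun n => constraintClass_anti (subset n))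
    (fun n => (large n).nonempty) (isClosed_constraintClass _).isCompact
    fun n => isClosed_constraintClass _
  exact ⟨R, Set.mem_iInter.1 hR⟩

section Run

variable {A D R : ℕ → Bool} {Q : LengthRequests} {h : ℕ × ℕ → Prop} {c : ℕ → Condition}

theorem exists_isRun (hA : ¬ KTrivial A) (hA' : TuringLE A zeroJump) (hD : ¬ ComputableSet D)
    (hD' : TuringLE D zeroJump) (Q : LengthRequests) (hh : PrimrecPred h)
    (halts : ∀ n, zeroJump n = true → ∃ x, h (n, x)) : ∃ c R, IsRun A D Q h c R := by
  obtain ⟨c, large, stage, graph⟩ := exists_effective_seq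
    (sigma01In_stage (Q := Q) (turingLE_iff.1 hA') (turingLE_iff.1 hD') hh)
    (I := fun _ S => Large S.1 S.2) (b₀ := ([], 0)) large_nil
    (fun n _ hS => exists_stage hA hD halts n hS) fun _ _ _ => Stage.large
  obtain ⟨R, hR⟩ := exists_forall_mem_constraintClass large fun n => (stage n).subset
  exact ⟨c, R, stage, graph, hR⟩

namespace IsRun

theorem mlRandom (hc : IsRun A D Q h c R) : MLRandom R := by
  rintro G ⟨⟨e, level⟩, le⟩
  simp only [level] at le ⊢
  exact (hc.stage e).exists_notMem_testLevel (hc.mem (e + 1)) le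

theorem not_turingLE (hc : IsRun A D Q h c R) : ¬ TuringLE D R := by
  rintro ⟨e, he⟩
  obtain ⟨m, i, ne⟩ := (hc.stage e).exists_not_oracleComputes_iff (hc.mem (e + 1))
  exact ne (he m i)

theorem jump_turingLE (hc : IsRun A D Q h c R) : TuringLE (jump R) zeroJump := by
  have outside : PrimrecPred fun q : ℕ × Condition => (jumpIndex, q.1, 0) ∉ q.2.1 :=
    (primrecPred_forall_mem (p := fun (q : ℕ × Condition) x => x ≠ (jumpIndex, q.1, 0))
      (g := fun q => q.2.1) (by fun_prop) (by fun_prop)).of_eq fun q =>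
        ⟨fun H hq => H _ hq rfl, fun H x hx hq => H (hq ▸ hx)⟩
  have graph_succ : Sigma01In zeroJump fun q : ℕ × Condition => c (q.1 + 1) = q.2 :=
    hc.graph.comp (g := fun q : ℕ × Condition => (q.1 + 1, q.2)) (by fun_prop)
  have decided : Delta01In zeroJump fun n => (jumpIndex, n, 0) ∉ (c (n + 1)).1 :=
    .of_graph graph_succ (p := fun n (S : Condition) => (jumpIndex, n, 0) ∉ S.1)
      (.of_primrecPred outside)
  exact turingLE_iff.2 <| decided.of_iff fun n =>
    ((hc.stage n).jump_eq_true_iff (hc.mem (n + 1))).symm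

theorem turingLE_zeroJump (hc : IsRun A D Q h c R) : TuringLE R zeroJump :=
  turingLE_iff.2 ((Delta01In.oracle (X := R)).1.delta01In_jump.trans
    (turingLE_iff.1 hc.jump_turingLE))

theorem zeroJump_turingLE_joinSet (hc : IsRun A D Q h c R) (hh : PrimrecPred h)
    (halts : ∀ n, zeroJump n = true ↔ ∃ x, h (n, x)) : TuringLE zeroJump (joinSet A R) := by
  choose s codes depth bound using fun n => (hc.stage n).exists_codes (hc.mem (n + 1))
  have graph : Sigma01In (joinSet A R) fun q : ℕ × ℕ => s q.1 = q.2 :=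
    Q.sigma01In_graph_of_codes (g := fun q => 2 * q.1 + 5 + Q.cost q.2) (by fun_prop) codes
      fun n => by rw [depth]; ring
  have search : PrimrecPred fun q : ℕ × ℕ => ∃ x < q.2, h (q.1, x) := by
    apply primrecPred_exists_lt <;> fun_prop
  have decided : Delta01In (joinSet A R) fun n => ∃ x < s n, h (n, x) :=
    .of_graph graph (p := fun n y => ∃ x < y, h (n, x)) (.of_primrecPred search)
  exact turingLE_iff.2 <| decided.of_iff fun n =>
    ⟨fun ⟨x, _, hx⟩ => (halts n).2 ⟨x, hx⟩, bound n⟩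

end IsRun

end Run

theorem stmt12_general (A : ℕ → Bool) (hA1 : TuringLE A zeroJump) (hA3 : ¬ KTrivial A)
    (D : ℕ → Bool) (hD1 : TuringLE D zeroJump) (hD2 : ¬ ComputableSet D) :
    ∃ R : ℕ → Bool, MLRandom R ∧ ¬ TuringLE D R ∧
      TuringLE (jump R) zeroJump ∧ TuringEquiv (joinSet A R) zeroJump := by
  obtain ⟨h, hh, halts⟩ := (sigma01In_jump (X := emptyOracle)).exists_primrecPred
  obtain ⟨Q⟩ := nonempty_lengthRequests
  obtain ⟨c, R, hc⟩ := exists_isRun hA3 hA1 hD2 hD1 Q hh fun n => (halts n).1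
  have join_le : TuringLE (joinSet A R) zeroJump :=
    turingLE_iff.2 (delta01In_joinSet (turingLE_iff.1 hA1) (turingLE_iff.1 hc.turingLE_zeroJump))
  exact ⟨R, hc.mlRandom, hc.not_turingLE, hc.jump_turingLE, join_le,
    hc.zeroJump_turingLE_joinSet hh halts⟩

/-- Theorem 7 of Day–Miller: cupping with a low random while
avoiding the cone above `D`. -/
theorem stmt12 (A : ℕ → Bool) (hA1 : TuringLE A zeroJump)
    (hA2 : ¬ TuringLE zeroJump A) (hA3 : ¬ KTrivial A)
    (D : ℕ → Bool) (hD1 : TuringLE D zeroJump) (hD2 : ¬ ComputableSet D) :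
    ∃ R : ℕ → Bool, MLRandom R ∧ ¬ TuringLE D R ∧
      TuringLE (jump R) zeroJump ∧ TuringEquiv (joinSet A R) zeroJump :=
  stmt12_general A hA1 hA3 D hD1 hD2
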